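/- arXiv:0901.4858 — 4 statements merged into one kernel-verified Lean document; each statement's English description precedes it below -/
import Mathlib

section
/- Every rayless graph admits an unfriendly partition. -/
open Cardinal

/-- A vertex `x` is happy in the two-colouring `π` of `G` if it has at least as many
neighbours in the opposite class as in its own class (as cardinals). -/
def Happy {V : Type*} (G : SimpleGraph V) (π : V → Bool) (x : V) : Prop :=
  #{y : V | G.Adj x y ∧ π y = π x} ≤ #{y : V | G.Adj x y ∧ π y ≠ π x}

/-- A two-colouring is unfriendly if every vertex is happy in it. -/
def Unfriendly {V : Type*} (G : SimpleGraph V) (π : V → Bool) : Prop :=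
  ∀ x : V, Happy G π x

/-- `G` contains a ray: a one-way infinite path. -/
def HasRay {V : Type*} (G : SimpleGraph V) : Prop :=
  ∃ r : ℕ → V, Function.Injective r ∧ ∀ n : ℕ, G.Adj (r n) (r (n + 1))

namespace RU
open Classical Set

variable {V : Type*}

noncomputable def mono (G : SimpleGraph V) (π : V → Bool) (p : V × V) : ℤ :=
  if G.Adj p.1 p.2 ∧ π p.1 = π p.2 then 1 else 0

noncomputable def Dl (G : SimpleGraph V) (π ρ : V → Bool) : ℤ :=
  ∑ᶠ p, (mono G ρ p - mono G π p)

def Adm (G : SimpleGraph V) (F : Set V) (π ρ : V → Bool) : Prop :=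
  {x | π x ≠ ρ x}.Finite ∧ ∀ x, π x ≠ ρ x → x ∈ F ∧ (G.neighborSet x).Finite

def Stable (G : SimpleGraph V) (F : Set V) (π : V → Bool) : Prop :=
  ∀ ρ, Adm G F π ρ → 0 ≤ Dl G π ρ

def Good (G : SimpleGraph V) (F : Set V) (π : V → Bool) : Prop :=
  (∀ x ∈ F, ¬ (G.neighborSet x).Finite → Happy G π x) ∧ Stable G F π

def P (G : SimpleGraph V) (F : Set V) : Prop :=
  ∀ σ : V → Bool, ∃ π : V → Bool, (∀ x ∉ F, π x = σ x) ∧ Good G F π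

def HP (G : SimpleGraph V) (F : Set V) : Prop := ∀ W ⊆ F, P G W

variable {G : SimpleGraph V}

lemma mono_congr {π ρ : V → Bool} {p : V × V} (h1 : π p.1 = ρ p.1) (h2 : π p.2 = ρ p.2) :
    mono G π p = mono G ρ p := by simp [mono, h1, h2]

lemma supp_fin {F : Set V} {π ρ : V → Bool} (h : Adm G F π ρ) :
    (Function.support (fun p => mono G ρ p - mono G π p)).Finite := by
  have : (⋃ x ∈ {x | π x ≠ ρ x}, (({x} ×ˢ G.neighborSet x) ∪ (G.neighborSet x ×ˢ {x}))).Finite := by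
    refine h.1.biUnion fun x hx => ?_
    have := (h.2 x hx).2
    exact ((finite_singleton x).prod this).union (this.prod (finite_singleton x))
  refine this.subset ?_
  rintro ⟨x, y⟩ hp
  by_cases ha : G.Adj x y
  · have : π x ≠ ρ x ∨ π y ≠ ρ y := by
      by_contra! hc
      exact hp (by simp [mono, hc.1, hc.2])
    rcases this with h | h
    · exact mem_biUnion (x := x) h (Or.inl ⟨rfl, ha⟩)
    · exact mem_biUnion (x := y) h (Or.inr ⟨ha.symm, rfl⟩)
  · exact (hp (by simp [mono, ha])).elim

lemma Dl_add {F F' : Set V} {π ρ τ : V → Bool} (h : Adm G F π ρ) (h' : Adm G F' ρ τ) :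
    Dl G π τ = Dl G π ρ + Dl G ρ τ := by
  unfold Dl
  rw [← finsum_add_distrib (supp_fin h) (supp_fin h')]
  exact finsum_congr fun p => by ring

lemma Adm.mono {F F' : Set V} {π ρ : V → Bool} (h : Adm G F π ρ) (hF : F ⊆ F') : Adm G F' π ρ :=
  ⟨h.1, fun x hx => ⟨hF (h.2 x hx).1, (h.2 x hx).2⟩⟩

lemma Adm.trans {F : Set V} {π ρ τ : V → Bool} (h : Adm G F π ρ) (h' : Adm G F ρ τ) :
    Adm G F π τ := by
  have key : ∀ x, π x ≠ τ x → π x ≠ ρ x ∨ ρ x ≠ τ x := by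
    intro x hx; by_contra! hc; exact hx (hc.1.trans hc.2)
  refine ⟨(h.1.union h'.1).subset fun x hx => key x hx, fun x hx => ?_⟩
  rcases key x hx with h1 | h1
  · exact h.2 x h1
  · exact h'.2 x h1

lemma Adm.of_sub {F F' : Set V} {π ρ π' ρ' : V → Bool} (h : Adm G F π ρ)
    (hs : ∀ x, π' x ≠ ρ' x → π x ≠ ρ x ∧ x ∈ F') : Adm G F' π' ρ' :=
  ⟨h.1.subset fun x hx => (hs x hx).1, fun x hx => ⟨(hs x hx).2, (h.2 x (hs x hx).1).2⟩⟩

/-- locality -/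
lemma Dl_congr {π ρ π' ρ' : V → Bool}
    (hs : ∀ x, π x ≠ ρ x ↔ π' x ≠ ρ' x)
    (h : ∀ x, π x ≠ ρ x → π x = π' x ∧ ρ x = ρ' x ∧
      ∀ y, G.Adj x y → π y = π' y ∧ ρ y = ρ' y) : Dl G π ρ = Dl G π' ρ' := by
  refine finsum_congr ?_
  rintro ⟨x, y⟩
  by_cases ha : G.Adj x y
  · by_cases hx : π x ≠ ρ x
    · obtain ⟨h1, h2, h3⟩ := h x hx
      obtain ⟨h4, h5⟩ := h3 y ha
      simp [mono, h1, h2, h4, h5]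
    · by_cases hy : π y ≠ ρ y
      · obtain ⟨h1, h2, h3⟩ := h y hy
        obtain ⟨h4, h5⟩ := h3 x ha.symm
        simp [mono, h1, h2, h4, h5]
      · have hx' := (hs x).not.1 hx
        have hy' := (hs y).not.1 hy
        push Not at hx hy hx' hy'
        simp [mono, hx, hy, hx', hy']
  · simp [mono, ha]

lemma restab {F : Set V} {π : V → Bool} (N : ℤ) (hN : ∀ ρ, Adm G F π ρ → N ≤ Dl G π ρ) :
    ∃ ρ, Adm G F π ρ ∧ Stable G F ρ := by
  have h0 : Adm G F π π := ⟨by simp, by simp⟩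
  obtain ⟨m, ⟨ρ, hρ, rfl⟩, hm⟩ := Int.exists_least_of_bdd (P := fun z => ∃ ρ, Adm G F π ρ ∧ Dl G π ρ = z)
    ⟨N, by rintro z ⟨ρ, hρ, rfl⟩; exact hN ρ hρ⟩ ⟨_, π, h0, rfl⟩
  refine ⟨ρ, hρ, fun τ hτ => ?_⟩
  have := hm _ ⟨τ, hρ.trans hτ, rfl⟩
  rw [Dl_add hρ hτ] at this
  linarith

/-- comparison when flipping `u` -/
lemma compare {F : Set V} {π ρ π₁ ρ₁ : V → Bool} {u : V} (Q : Finset V)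
    (h : Adm G F π ρ) (hu : π u = ρ u) (hu1 : π₁ u = ρ₁ u) (hne : π₁ u ≠ π u)
    (h1 : ∀ x, x ≠ u → π₁ x = π x) (h2 : ∀ x, x ≠ u → ρ₁ x = ρ x)
    (hQ : ∀ x, G.Adj u x → π x ≠ ρ x → π x ≠ π u → x ∈ Q) :
    Dl G π ρ - 4 * Q.card ≤ Dl G π₁ ρ₁ := by
  have hadm : Adm G F π₁ ρ₁ := h.of_sub (F' := F) (by
    intro x hx
    have : x ≠ u := by rintro rfl; exact hx hu1
    rw [h1 x this, h2 x this] at hx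
    exact ⟨hx, (h.2 x hx).1⟩)
  let S : Finset (V × V) := ({u} ×ˢ Q) ∪ (Q ×ˢ {u})
  have hS : (S.card : ℤ) ≤ 2 * Q.card := by
    have := Finset.card_union_le (({u} : Finset V) ×ˢ Q) (Q ×ˢ {u})
    simp only [Finset.card_product, Finset.card_singleton, one_mul, mul_one] at this
    have : S.card ≤ Q.card + Q.card := this
    omega
  let f : V × V → ℤ := fun p => if p ∈ S then 2 else 0
  have hf : (Function.support f).Finite := by
    refine S.finite_toSet.subset fun p hp => ?_
    by_contra hc
    exact hp (if_neg hc)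
  have hfs : ∑ᶠ p, f p = 2 * S.card := by
    rw [finsum_eq_sum_of_support_subset (s := S)]
    · rw [Finset.sum_congr rfl (g := fun _ => (2 : ℤ)) (fun p hp => if_pos hp)]
      simp [mul_comm]
    · intro p hp
      by_contra hc
      exact hp (if_neg hc)
  have key : Dl G π ρ ≤ Dl G π₁ ρ₁ + ∑ᶠ p, f p := by
    unfold Dl
    rw [← finsum_add_distrib (supp_fin hadm) hf]
    refine finsum_le_finsum' (supp_fin h) ?_ ?_
    · refine ((supp_fin hadm).union hf).subset ?_
      exact Function.support_add _ _
    · rintro ⟨x, y⟩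
      by_cases ha : G.Adj x y
      · by_cases hx : x = u
        · subst hx
          have hy : y ≠ x := ha.ne'
          have e1 := h1 y hy
          have e2 := h2 y hy
          have := hQ y ha
          have hm : π y ≠ ρ y → π y ≠ π x → ((x, y) : V × V) ∈ S := by
            intro a b; simp [S, hQ y ha a b]
          simp only [mono, f, ha, true_and, e1, e2, ← hu, ← hu1]
          generalize π x = a at *
          generalize π₁ x = b at *
          generalize π y = c at *
          generalize ρ y = d at *
          clear e1 e2 this
          by_cases hh : ((x, y) : V × V) ∈ S <;> simp only [hh, if_true, if_false, imp_false] at * <;>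
          cases a <;> cases b <;> cases c <;> cases d <;> simp_all
        · by_cases hy : y = u
          · subst hy
            have e1 := h1 x hx
            have e2 := h2 x hx
            have hm : π x ≠ ρ x → π x ≠ π y → ((x, y) : V × V) ∈ S := by
              intro a b; simp [S, hQ x ha.symm a b]
            simp only [mono, f, ha, true_and, e1, e2, ← hu, ← hu1]
            generalize π x = a at *
            generalize π₁ y = b at *
            generalize π y = c at *
            generalize ρ x = d at *
            clear e1 e2
            by_cases hh : ((x, y) : V × V) ∈ S <;> simp only [hh, if_true, if_false, imp_false] at * <;>
            cases a <;> cases b <;> cases c <;> cases d <;> simp_all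
          · have : 0 ≤ f (x, y) := by simp only [f]; split_ifs <;> norm_num
            simp only [mono, h1 x hx, h2 x hx, h1 y hy, h2 y hy]
            linarith
      · have : 0 ≤ f (x, y) := by simp only [f]; split_ifs <;> norm_num
        simp only [mono, ha, false_and, if_false]
        linarith
  rw [hfs] at key
  linarith

lemma happy_congr {π π' : V → Bool} {x : V} (hx : π x = π' x) (h : ∀ y, G.Adj x y → π y = π' y)
    (hh : Happy G π x) : Happy G π' x := by
  unfold Happy at *
  have e1 : {y : V | G.Adj x y ∧ π y = π x} = {y : V | G.Adj x y ∧ π' y = π' x} := by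
    ext y; simp only [mem_ofPred_eq]
    exact and_congr_right fun a => by rw [h y a, hx]
  have e2 : {y : V | G.Adj x y ∧ π y ≠ π x} = {y : V | G.Adj x y ∧ π' y ≠ π' x} := by
    ext y; simp only [mem_ofPred_eq]
    exact and_congr_right fun a => by rw [h y a, hx]
  rw [← e1, ← e2]; exact hh

lemma nbr_split (π : V → Bool) (x : V) : G.neighborSet x =
    {y : V | G.Adj x y ∧ π y = π x} ∪ {y : V | G.Adj x y ∧ π y ≠ π x} := by
  ext y; simp only [mem_union, mem_ofPred_eq, SimpleGraph.mem_neighborSet]; tauto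

lemma happy_inf {π : V → Bool} {x : V} (hx : ¬ (G.neighborSet x).Finite) :
    Happy G π x ↔ #(G.neighborSet x) ≤ #{y : V | G.Adj x y ∧ π y ≠ π x} := by
  have hinf : ℵ₀ ≤ #(G.neighborSet x) := by
    rw [← not_lt, Cardinal.lt_aleph0_iff_set_finite]; exact hx
  constructor
  · intro h
    have h1 : #(G.neighborSet x) ≤ #{y : V | G.Adj x y ∧ π y = π x} + #{y : V | G.Adj x y ∧ π y ≠ π x} := by
      conv_lhs => rw [nbr_split π x]
      exact Cardinal.mk_union_le _ _
    by_contra hc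
    push Not at hc
    exact absurd h1 (not_le.2 (Cardinal.add_lt_of_lt hinf (lt_of_le_of_lt h hc) hc))
  · intro h
    refine le_trans (Cardinal.mk_le_mk_of_subset fun y hy => hy.1) h

/-- robustness -/
lemma happy_robust {π π' : V → Bool} {x : V} (hx : ¬ (G.neighborSet x).Finite)
    (hh : Happy G π x) (he : π x = π' x)
    (hc : #{y : V | G.Adj x y ∧ π y ≠ π' y} < #(G.neighborSet x)) : Happy G π' x := by
  have hinf : ℵ₀ ≤ #(G.neighborSet x) := by
    rw [← not_lt, Cardinal.lt_aleph0_iff_set_finite]; exact hx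
  rw [happy_inf hx] at *
  have h1 : #{y : V | G.Adj x y ∧ π y ≠ π x} ≤
      #{y : V | G.Adj x y ∧ π' y ≠ π' x} + #{y : V | G.Adj x y ∧ π y ≠ π' y} := by
    refine le_trans (Cardinal.mk_le_mk_of_subset ?_) (Cardinal.mk_union_le _ _)
    rintro y ⟨ha, hy⟩
    by_cases h : π y = π' y
    · exact Or.inl ⟨ha, by rw [← h, ← he]; exact hy⟩
    · exact Or.inr ⟨ha, h⟩
  by_contra hcc
  push Not at hcc
  exact absurd (hh.trans h1) (not_le.2 (Cardinal.add_lt_of_lt hinf hcc hc))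

lemma fin_happy {F : Set V} {π : V → Bool} (h : Stable G F π) {x : V} (hx : x ∈ F)
    (hf : (G.neighborSet x).Finite) : Happy G π x := by
  let ρ : V → Bool := Function.update π x (!π x)
  have hρ : ∀ y, y ≠ x → ρ y = π y := fun y hy => Function.update_of_ne hy _ _
  have hρx : ρ x = !π x := Function.update_self _ _ _
  have had : Adm G F π ρ := by
    have : ∀ y, π y ≠ ρ y → y = x := by
      intro y hy; by_contra hc; exact hy (hρ y hc).symm
    exact ⟨(finite_singleton x).subset fun y hy => this y hy, fun y hy => by rw [this y hy]; exact ⟨hx, hf⟩⟩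
  have h0 := h ρ had
  let N := hf.toFinset
  have hN : ∀ y, y ∈ N ↔ G.Adj x y := by intro y; simp [N]
  let A := N.filter (fun y => π y = π x)
  let B := N.filter (fun y => π y ≠ π x)
  have hAe : {y : V | G.Adj x y ∧ π y = π x} = (A : Set V) := by ext y; simp [A, hN]
  have hBe : {y : V | G.Adj x y ∧ π y ≠ π x} = (B : Set V) := by ext y; simp [B, hN]
  have hsum : Dl G π ρ = 2 * ((B.card : ℤ) - A.card) := by
    unfold Dl
    rw [finsum_eq_sum_of_support_subset (s := ({x} ×ˢ N) ∪ (N ×ˢ {x}))]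
    · rw [Finset.sum_union]
      · rw [Finset.sum_product, Finset.sum_product_right]
        simp only [Finset.sum_singleton]
        have e : ∀ y ∈ N, mono G ρ (x, y) - mono G π (x, y) = (if π y ≠ π x then 1 else 0) - (if π y = π x then 1 else 0) := by
          intro y hy
          have ha := (hN y).1 hy
          simp only [mono, ha, true_and, hρx, hρ y ha.ne']
          cases π x <;> cases π y <;> simp
        have e' : ∀ y ∈ N, mono G ρ (y, x) - mono G π (y, x) = (if π y ≠ π x then 1 else 0) - (if π y = π x then 1 else 0) := by
          intro y hy
          have ha := (hN y).1 hy
          simp only [mono, ha.symm, true_and, hρx, hρ y ha.ne']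
          cases π x <;> cases π y <;> simp
        rw [Finset.sum_congr rfl e, Finset.sum_congr rfl e', Finset.sum_sub_distrib, Finset.sum_boole, Finset.sum_boole]
        ring
      · rw [Finset.disjoint_left]
        rintro ⟨a, b⟩ h1 h2
        simp only [Finset.mem_product, Finset.mem_singleton, hN] at h1 h2
        rw [h2.2] at h1
        exact G.loopless.irrefl x h1.2
    · rintro ⟨a, b⟩ hp
      have hab : G.Adj a b := by
        by_contra hc; exact hp (by simp [mono, hc])
      by_cases ha : a = x
      · subst ha; simp [hN, hab]
      · by_cases hb : b = x
        · subst hb; simp [hN, hab.symm]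
        · exact (hp (by simp [mono, hρ a ha, hρ b hb])).elim
  unfold Happy
  rw [hAe, hBe]
  simp only [Finset.coe_sort_coe, Cardinal.mk_coe_finset, Nat.cast_le]
  omega

lemma union_P {F : Set V} (C : V → Set V) (hP : ∀ x ∈ F, P G (C x ∩ F)) (hmem : ∀ x ∈ F, x ∈ C x)
    (heq : ∀ x ∈ F, ∀ y ∈ F, y ∈ C x → C y = C x)
    (hadj : ∀ x ∈ F, ∀ y ∈ F, G.Adj x y → C y = C x) : P G F := by
  intro σ
  have : ∀ c : Set V, ∃ π : V → Bool, P G (c ∩ F) → (∀ x ∉ c ∩ F, π x = σ x) ∧ Good G (c ∩ F) π := by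
    intro c
    by_cases h : P G (c ∩ F)
    · obtain ⟨π, hπ⟩ := h σ
      exact ⟨π, fun _ => hπ⟩
    · exact ⟨σ, fun h' => (h h').elim⟩
  choose q hq using this
  let π : V → Bool := fun x => if x ∈ F then q (C x) x else σ x
  have hπF : ∀ x ∈ F, π x = q (C x) x := fun x hx => if_pos hx
  have hπn : ∀ x ∉ F, π x = σ x := fun x hx => if_neg hx
  have hπ : ∀ x ∈ F, ∀ y, G.Adj x y → π y = q (C x) y := by
    intro x hx y ha
    by_cases hy : y ∈ F
    · rw [hπF y hy, hadj x hx y hy ha]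
    · rw [hπn y hy, (hq _ (hP x hx)).1 y (fun h => hy h.2)]
  refine ⟨π, hπn, ?_, ?_⟩
  · intro x hx hi
    refine happy_congr (hπF x hx).symm (fun y hy => (hπ x hx y hy).symm) ?_
    exact (hq _ (hP x hx)).2.1 x ⟨hmem x hx, hx⟩ hi
  · have main : ∀ n : ℕ, ∀ ρ, Adm G F π ρ → {x | π x ≠ ρ x}.ncard = n → 0 ≤ Dl G π ρ := by
      intro n
      induction n using Nat.strong_induction_on with
      | _ n ih =>
      intro ρ hρ hn
      by_cases hT : ∃ x, π x ≠ ρ x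
      · obtain ⟨x, hx⟩ := hT
        have hxF := (hρ.2 x hx).1
        let c := C x
        let τ : V → Bool := fun y => if y ∈ c then ρ y else π y
        let ρ'' : V → Bool := fun y => if y ∈ c then π y else ρ y
        let π₂ : V → Bool := q c
        let ρ₂ : V → Bool := fun y => if y ∈ c ∧ π y ≠ ρ y then ρ y else π₂ y
        have h1 : Adm G F π τ := hρ.of_sub (by
          intro y hy
          by_cases hc : y ∈ c
          · simp only [τ, hc, if_true] at hy; exact ⟨hy, (hρ.2 y hy).1⟩
          · simp [τ, hc] at hy)
        have h2 : Adm G F τ ρ := hρ.of_sub (by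
          intro y hy
          by_cases hc : y ∈ c
          · simp [τ, hc] at hy
          · simp only [τ, hc, if_false] at hy; exact ⟨hy, (hρ.2 y hy).1⟩)
        have h3 : Adm G F π ρ'' := hρ.of_sub (by
          intro y hy
          by_cases hc : y ∈ c
          · simp [ρ'', hc] at hy
          · simp only [ρ'', hc, if_false] at hy; exact ⟨hy, (hρ.2 y hy).1⟩)
        have hc2 : ∀ y ∈ c, y ∈ F → π y = π₂ y := by
          intro y hy hyF
          rw [hπF y hyF, heq x hxF y hyF hy]
        have hca : ∀ y ∈ c, y ∈ F → ∀ z, G.Adj y z → π z = π₂ z := by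
          intro y hy hyF z hz
          rw [hπ y hyF z hz, heq x hxF y hyF hy]
        have h4 : Adm G (c ∩ F) π₂ ρ₂ := hρ.of_sub (by
          intro y hy
          by_cases hc : y ∈ c ∧ π y ≠ ρ y
          · exact ⟨hc.2, hc.1, (hρ.2 y hc.2).1⟩
          · simp only [ρ₂, hc, if_false] at hy; exact (hy rfl).elim)
        have e1 : Dl G π τ = Dl G π₂ ρ₂ := by
          have hs : ∀ y, π y ≠ τ y → y ∈ c ∧ π y ≠ ρ y := by
            intro y hy
            by_cases hc : y ∈ c
            · simp only [τ, hc, if_true] at hy; exact ⟨hc, hy⟩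
            · simp [τ, hc] at hy
          apply Dl_congr
          · intro y
            by_cases hc : y ∈ c ∧ π y ≠ ρ y
            · have hyF := (hρ.2 y hc.2).1
              simp only [τ, ρ₂, hc, hc.1, if_true, hc2 y hc.1 hyF, true_and]
              have := hc.2; rw [hc2 y hc.1 hyF] at this
              simp [this]
            · have : ¬ π y ≠ τ y := fun h => hc (hs y h)
              simp only [this, false_iff, ρ₂, hc, if_false]; simp
          · intro y hy
            have hc := hs y hy
            have hyF := (hρ.2 y hc.2).1
            refine ⟨hc2 y hc.1 hyF, by simp [τ, ρ₂, hc], fun z hz => ⟨hca y hc.1 hyF z hz, ?_⟩⟩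
            have := hca y hc.1 hyF z hz
            by_cases hzc : z ∈ c
            · by_cases hzd : π z = ρ z
              · simp only [τ, ρ₂, hzc, hzd, if_true]; simp [← hzd, this]
              · simp [τ, ρ₂, hzc, hzd]
            · simp [τ, ρ₂, hzc, this]
        have e2 : Dl G τ ρ = Dl G π ρ'' := by
          have hs : ∀ y, τ y ≠ ρ y → y ∉ c ∧ π y ≠ ρ y := by
            intro y hy
            by_cases hc : y ∈ c
            · simp [τ, hc] at hy
            · simp only [τ, hc, if_false] at hy; exact ⟨hc, hy⟩
          apply Dl_congr
          · intro y
            by_cases hc : y ∈ c <;> simp [τ, ρ'', hc]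
          · intro y hy
            have hc := hs y hy
            have hyF := (hρ.2 y hc.2).1
            refine ⟨by simp [τ, hc], by simp [ρ'', hc], fun z hz => ?_⟩
            by_cases hzc : z ∈ c
            · have : π z = ρ z := by
                by_contra hzd
                have hzF := (hρ.2 z hzd).1
                have a1 := heq x hxF z hzF hzc
                have a2 := hadj y hyF z hzF hz
                apply hc.1
                have := hmem y hyF
                rw [← a2, a1] at this
                exact this
              simp [τ, ρ'', hzc, this]
            · simp [τ, ρ'', hzc]
        rw [Dl_add h1 h2, e1, e2]
        have p1 := (hq c (hP x hxF)).2.2 ρ₂ h4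
        have p2 : 0 ≤ Dl G π ρ'' := by
          refine ih _ ?_ ρ'' h3 rfl
          rw [← hn]
          refine Set.ncard_lt_ncard ?_ hρ.1
          refine ⟨?_, ?_⟩
          · intro y hy
            by_cases hc : y ∈ c
            · simp [ρ'', hc] at hy
            · simpa [ρ'', hc] using hy
          · intro hss
            have : x ∈ {y | π y ≠ ρ'' y} := hss hx
            have hxc : x ∈ c := hmem x hxF
            simp [ρ'', hxc] at this
        exact add_nonneg p1 p2
      · push Not at hT
        have : π = ρ := funext hT
        subst this
        simp [Dl]
    exact fun ρ hρ => main _ ρ hρ rfl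

lemma union_HP {F : Set V} (C : V → Set V) (hP : ∀ x ∈ F, HP G (C x)) (hmem : ∀ x ∈ F, x ∈ C x)
    (heq : ∀ x ∈ F, ∀ y ∈ F, y ∈ C x → C y = C x)
    (hadj : ∀ x ∈ F, ∀ y ∈ F, G.Adj x y → C y = C x) : HP G F := fun W hW =>
  union_P C (fun x hx => hP x (hW hx) _ inter_subset_left) (fun x hx => hmem x (hW hx))
    (fun x hx y hy => heq x (hW hx) y (hW hy)) (fun x hx y hy => hadj x (hW hx) y (hW hy))

lemma closure_small (O D : Set V) (hO : ℵ₀ ≤ #O) (hD : ∀ x ∈ D, #(G.neighborSet x) ≤ #O) :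
    ∃ W ⊆ D, #W ≤ #O ∧ O ∩ D ⊆ W ∧ ∀ x ∈ W, ∀ y ∈ D, G.Adj x y → y ∈ W := by
  let Wn : ℕ → Set V := fun n => Nat.rec (O ∩ D) (fun _ A => {y | y ∈ D ∧ ∃ x ∈ A, G.Adj x y}) n
  have hs : ∀ n, Wn (n+1) = {y | y ∈ D ∧ ∃ x ∈ Wn n, G.Adj x y} := fun n => rfl
  have hsub : ∀ n, Wn n ⊆ D := by
    intro n; cases n with
    | zero => exact inter_subset_right
    | succ n => rw [hs]; exact fun y hy => hy.1
  have hcard : ∀ n : ℕ, #(↥(Wn n)) ≤ #O := by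
    intro n
    induction n with
    | zero => exact Cardinal.mk_le_mk_of_subset inter_subset_left
    | succ n ih =>
      have : Wn (n+1) ⊆ ⋃ x ∈ Wn n, G.neighborSet x := by
        rw [hs]; rintro y ⟨_, x, hx, ha⟩; exact mem_biUnion hx ha
      refine (Cardinal.mk_le_mk_of_subset this).trans ?_
      refine (Cardinal.mk_biUnion_le _ _).trans ?_
      refine (mul_le_mul' ih (ciSup_le' fun x => hD _ (hsub n x.2))).trans ?_
      rw [Cardinal.mul_eq_self hO]
  refine ⟨⋃ n, Wn n, iUnion_subset hsub, ?_, subset_iUnion Wn 0, ?_⟩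
  · have := Cardinal.mk_iUnion_le_lift Wn
    simp only [Cardinal.lift_uzero, Cardinal.mk_nat, Cardinal.lift_aleph0] at this
    refine this.trans ((mul_le_mul' hO (ciSup_le' hcard)).trans ?_)
    rw [Cardinal.mul_eq_self hO]
  · rintro x hx y hy ha
    obtain ⟨n, hn⟩ := mem_iUnion.1 hx
    exact mem_iUnion.2 ⟨n+1, hy, x, hn, ha⟩


lemma add_fin {F : Set V} {u : V} (hF : P G F) (hf : (G.neighborSet u).Finite) :
    P G (insert u F) := by
  by_cases huF : u ∈ F
  · rwa [insert_eq_of_mem huF]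
  intro σ
  obtain ⟨π, hπσ, hπi, hπs⟩ := hF σ
  let π₁ : V → Bool := Function.update π u (!π u)
  have h1 : ∀ y, y ≠ u → π₁ y = π y := fun y hy => Function.update_of_ne hy _ _
  have h1u : π₁ u = !π u := Function.update_self _ _ _
  have hA1 : Adm G (insert u F) π π₁ := by
    have : ∀ y, π y ≠ π₁ y → y = u := by
      intro y hy; by_contra hc; exact hy (h1 y hc).symm
    exact ⟨(finite_singleton u).subset fun y hy => this y hy,
      fun y hy => by rw [this y hy]; exact ⟨mem_insert _ _, hf⟩⟩
  have hb : ∀ ρ, Adm G (insert u F) π ρ →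
      min 0 (Dl G π π₁ - 4 * hf.toFinset.card) ≤ Dl G π ρ := by
    intro ρ hρ
    by_cases hu : π u = ρ u
    · refine (min_le_left _ _).trans (hπs ρ (hρ.of_sub ?_))
      intro x hx
      refine ⟨hx, ((hρ.2 x hx).1).resolve_left ?_⟩
      rintro rfl; exact hx hu
    · refine (min_le_right _ _).trans ?_
      have hu' : π₁ u = ρ u := by
        rw [h1u]; revert hu; cases π u <;> cases ρ u <;> simp
      let ρ₀ : V → Bool := Function.update ρ u (π u)
      have h0 : ∀ y, y ≠ u → ρ₀ y = ρ y := fun y hy => Function.update_of_ne hy _ _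
      have h0u : ρ₀ u = π u := Function.update_self _ _ _
      have hA0 : Adm G F π ρ₀ := hρ.of_sub (by
        intro x hx
        have hxu : x ≠ u := by rintro rfl; exact hx h0u.symm
        rw [h0 x hxu] at hx
        exact ⟨hx, ((hρ.2 x hx).1).resolve_left hxu⟩)
      have hA2 : Adm G F π₁ ρ := hρ.of_sub (by
        intro x hx
        have hxu : x ≠ u := by rintro rfl; exact hx hu'
        rw [h1 x hxu] at hx
        exact ⟨hx, ((hρ.2 x hx).1).resolve_left hxu⟩)
      have c := compare (π₁ := π₁) (ρ₁ := ρ) (u := u) hf.toFinset hA0 h0u.symm hu'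
        (by rw [h1u]; simp) h1 (fun x hx => (h0 x hx).symm) (fun x hx _ _ => by simpa using hx)
      have := hπs ρ₀ hA0
      rw [Dl_add hA1 hA2]
      linarith
  obtain ⟨ρ, hρ, hst⟩ := restab _ hb
  refine ⟨ρ, ?_, ?_, hst⟩
  · intro x hx
    have : π x = ρ x := by
      by_contra hc; exact hx (hρ.2 x hc).1
    rw [← this]; exact hπσ x fun h => hx (mem_insert_of_mem _ h)
  · intro x hx hxi
    have hxu : x ≠ u := by rintro rfl; exact hxi hf
    have hxF := hx.resolve_left hxu
    refine happy_robust hxi (hπi x hxF hxi) ?_ ?_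
    · by_contra hc; exact hxi (hρ.2 x hc).2
    · refine lt_of_lt_of_le (Cardinal.lt_aleph0_iff_set_finite.2 (hρ.1.subset fun y hy => hy.2)) ?_
      rw [← not_lt, Cardinal.lt_aleph0_iff_set_finite]; exact hxi

lemma add_inf {F : Set V} {u : V} (hF : HP G F) (hf : ¬ (G.neighborSet u).Finite) :
    P G (insert u F) := by
  by_cases huF : u ∈ F
  · rw [insert_eq_of_mem huF]; exact hF F subset_rfl
  intro σ
  obtain ⟨π, hπσ, hπi, hπs⟩ := hF F subset_rfl σ
  have hinf : ∀ x, ¬ (G.neighborSet x).Finite → ℵ₀ ≤ #(G.neighborSet x) := by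
    intro x hx
    rw [← not_lt, Cardinal.lt_aleph0_iff_set_finite]; exact hx
  by_cases hhap : Happy G π u
  · refine ⟨π, fun x hx => hπσ x fun h => hx (mem_insert_of_mem _ h), ?_, ?_⟩
    · rintro x (rfl | hx) hi
      · exact hhap
      · exact hπi x hx hi
    · intro ρ hρ
      refine hπs ρ (hρ.of_sub fun x hx => ⟨hx, ((hρ.2 x hx).1).resolve_left ?_⟩)
      rintro rfl; exact hf (hρ.2 x hx).2
  let π₁ : V → Bool := Function.update π u (!π u)
  have h1 : ∀ y, y ≠ u → π₁ y = π y := fun y hy => Function.update_of_ne hy _ _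
  have h1u : π₁ u = !π u := Function.update_self _ _ _
  have h1ne : π₁ u ≠ π u := by rw [h1u]; simp
  let O : Set V := {y : V | G.Adj u y ∧ π y ≠ π u}
  have hOlt : #O < #(G.neighborSet u) := by
    rw [happy_inf hf, not_le] at hhap; exact hhap
  have hu1 : Happy G π₁ u := by
    unfold Happy at hhap ⊢
    push Not at hhap
    refine (Cardinal.mk_le_mk_of_subset ?_).trans (hhap.le.trans (Cardinal.mk_le_mk_of_subset ?_))
    · rintro y ⟨ha, hy⟩
      refine ⟨ha, ?_⟩
      rw [h1 y ha.ne'] at hy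
      rw [hy]; exact h1ne
    · rintro y ⟨ha, hy⟩
      refine ⟨ha, ?_⟩
      rw [h1 y ha.ne', hy]; exact h1ne.symm
  -- comparison on F
  have hcmp : ∀ (Q : Finset V) (ρ : V → Bool), Adm G F π₁ ρ → (∀ x ∈ O, π₁ x ≠ ρ x → x ∈ Q) →
      -(4 * Q.card : ℤ) ≤ Dl G π₁ ρ := by
    intro Q ρ hρ hQ
    have hu' : π₁ u = ρ u := by
      by_contra hc; exact huF (hρ.2 u hc).1
    let ρ₀ : V → Bool := Function.update ρ u (π u)
    have h0 : ∀ y, y ≠ u → ρ₀ y = ρ y := fun y hy => Function.update_of_ne hy _ _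
    have h0u : ρ₀ u = π u := Function.update_self _ _ _
    have hA0 : Adm G F π ρ₀ := hρ.of_sub (by
      intro x hx
      have hxu : x ≠ u := by rintro rfl; exact hx h0u.symm
      rw [h0 x hxu, ← h1 x hxu] at hx
      exact ⟨hx, (hρ.2 x hx).1⟩)
    have c := compare (π₁ := π₁) (ρ₁ := ρ) (u := u) Q hA0 h0u.symm hu'
      h1ne h1 (fun x hx => (h0 x hx).symm) (fun x hx hx1 hx2 => hQ x ⟨hx, hx2⟩ (by
        rwa [h1 x hx.ne', ← h0 x hx.ne']))
    have := hπs ρ₀ hA0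
    linarith
  by_cases hOf : O.Finite
  · obtain ⟨ρ, hρ, hst⟩ := restab (π := π₁) (F := F) (G := G) _
      (fun ρ hρ => hcmp hOf.toFinset ρ hρ (fun x hx _ => by simpa using hx))
    have hsm : ∀ x, ¬ (G.neighborSet x).Finite → ∀ S : Set V, S.Finite → #S < #(G.neighborSet x) :=
      fun x hx S hS => lt_of_lt_of_le (Cardinal.lt_aleph0_iff_set_finite.2 hS) (hinf x hx)
    refine ⟨ρ, ?_, ?_, ?_⟩
    · intro x hx
      have hxu : x ≠ u := by rintro rfl; exact hx (mem_insert _ _)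
      have : π₁ x = ρ x := by
        by_contra hc; exact hx (mem_insert_of_mem _ (hρ.2 x hc).1)
      rw [← this, h1 x hxu]; exact hπσ x fun h => hx (mem_insert_of_mem _ h)
    · intro x hx hxi
      have hxe : π₁ x = ρ x := by by_contra hc; exact hxi (hρ.2 x hc).2
      rcases hx with rfl | hx
      · exact happy_robust hxi hu1 hxe (hsm _ hxi _ (hρ.1.subset fun y hy => hy.2))
      · have hxu : x ≠ u := by rintro rfl; exact huF hx
        refine happy_robust hxi (hπi x hx hxi) (by rw [← hxe, h1 x hxu]) (hsm _ hxi _ ?_)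
        refine (hρ.1.insert u).subset ?_
        rintro y ⟨_, hy⟩
        by_cases hyu : y = u
        · exact Or.inl hyu
        · right; change π₁ y ≠ ρ y; rwa [h1 y hyu]
    · intro τ hτ
      refine hst τ (hτ.of_sub fun x hx => ⟨hx, ((hτ.2 x hx).1).resolve_left ?_⟩)
      rintro rfl; exact hf (hτ.2 x hx).2
  · have hO : ℵ₀ ≤ #O := by
      rw [← not_lt, Cardinal.lt_aleph0_iff_set_finite]; exact hOf
    obtain ⟨W, hWD, hWc, hWO, hWcl⟩ := closure_small (G := G) O
      {x | x ∈ F ∧ #(G.neighborSet x) ≤ #O} hO (fun x hx => hx.2)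
    have hWF : W ⊆ F := fun x hx => (hWD hx).1
    have hfD : ∀ x ∈ F, (G.neighborSet x).Finite → #(G.neighborSet x) ≤ #O := fun x _ hx =>
      (Cardinal.lt_aleph0_iff_set_finite.2 hx).le.trans hO
    obtain ⟨π', hπ'W, hπ'i, hπ's⟩ := hF W hWF π₁
    have huW : u ∉ W := fun h => huF (hWF h)
    refine ⟨π', ?_, ?_, ?_⟩
    · intro x hx
      have hxu : x ≠ u := by rintro rfl; exact hx (mem_insert _ _)
      have hxF : x ∉ F := fun h => hx (mem_insert_of_mem _ h)
      rw [hπ'W x fun h => hxF (hWF h), h1 x hxu, hπσ x hxF]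
    · intro x hx hxi
      by_cases hxW : x ∈ W
      · exact hπ'i x hxW hxi
      rcases hx with rfl | hx
      · refine happy_robust hxi hu1 (hπ'W x hxW).symm (lt_of_le_of_lt ?_ hOlt)
        refine (Cardinal.mk_le_mk_of_subset ?_).trans hWc
        rintro y ⟨_, hy⟩
        by_contra hc; exact hy (hπ'W y hc).symm
      · have hxu : x ≠ u := by rintro rfl; exact huF hx
        refine happy_robust hxi (hπi x hx hxi) (by rw [hπ'W x hxW, h1 x hxu]) ?_
        have hch : ∀ y, π y ≠ π' y → y = u ∨ y ∈ W := by
          intro y hy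
          by_contra! hc
          exact hy (by rw [hπ'W y hc.2, h1 y hc.1])
        by_cases hxd : #(G.neighborSet x) ≤ #O
        · refine lt_of_lt_of_le (Cardinal.lt_aleph0_iff_set_finite.2
            ((finite_singleton u).subset ?_)) (hinf x hxi)
          rintro y ⟨ha, hy⟩
          refine (hch y hy).resolve_right fun hyW => hxW ?_
          exact hWcl y hyW x ⟨hx, hxd⟩ ha.symm
        · push Not at hxd
          refine lt_of_le_of_lt ?_ hxd
          refine (Cardinal.mk_le_mk_of_subset (t := {u} ∪ W) fun y hy => hch y hy.2).trans ?_
          refine (Cardinal.mk_union_le _ _).trans ?_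
          refine (add_le_add (b := #O) ?_ hWc).trans (Cardinal.add_eq_self hO).le
          rw [Cardinal.mk_singleton]
          exact Cardinal.one_le_aleph0.trans hO
    · intro ρ hρ
      have hρF : ∀ x, π' x ≠ ρ x → x ∈ F := by
        intro x hx
        refine ((hρ.2 x hx).1).resolve_left ?_
        rintro rfl; exact hf (hρ.2 x hx).2
      let τ : V → Bool := fun y => if y ∈ W then ρ y else π' y
      let ρ₁ : V → Bool := fun y => if y ∈ W then π₁ y else ρ y
      have hτW : ∀ y ∈ W, τ y = ρ y := fun y hy => if_pos hy
      have hτn : ∀ y ∉ W, τ y = π' y := fun y hy => if_neg hy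
      have hρW : ∀ y ∈ W, ρ₁ y = π₁ y := fun y hy => if_pos hy
      have hρn : ∀ y ∉ W, ρ₁ y = ρ y := fun y hy => if_neg hy
      have a1 : Adm G W π' τ := hρ.of_sub (by
        intro y hy
        by_cases hc : y ∈ W
        · rw [hτW y hc] at hy; exact ⟨hy, hc⟩
        · exact (hy (hτn y hc).symm).elim)
      have a2 : Adm G F τ ρ := hρ.of_sub (by
        intro y hy
        by_cases hc : y ∈ W
        · exact (hy (hτW y hc)).elim
        · rw [hτn y hc] at hy; exact ⟨hy, hρF y hy⟩)
      have hs3 : ∀ y, π₁ y ≠ ρ₁ y → y ∉ W ∧ π' y ≠ ρ y := by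
        intro y hy
        by_cases hc : y ∈ W
        · exact (hy (hρW y hc).symm).elim
        · rw [hρn y hc, ← hπ'W y hc] at hy; exact ⟨hc, hy⟩
      have a3 : Adm G F π₁ ρ₁ := hρ.of_sub fun y hy => ⟨(hs3 y hy).2, hρF y (hs3 y hy).2⟩
      rw [Dl_add a1 a2]
      have e : Dl G τ ρ = Dl G π₁ ρ₁ := by
        apply Dl_congr
        · intro y
          by_cases hc : y ∈ W
          · simp [hτW y hc, hρW y hc]
          · rw [hτn y hc, hρn y hc, hπ'W y hc]
        · intro y hy
          have hc : y ∉ W := fun hc => hy (hτW y hc)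
          have hy' : π' y ≠ ρ y := by rwa [hτn y hc] at hy
          refine ⟨by rw [hτn y hc, hπ'W y hc], (hρn y hc).symm, fun z hz => ?_⟩
          have hzW : z ∉ W := fun hzW => hc (hWcl z hzW y
            ⟨hρF y hy', hfD y (hρF y hy') (hρ.2 y hy').2⟩ hz.symm)
          exact ⟨by rw [hτn z hzW, hπ'W z hzW], (hρn z hzW).symm⟩
      rw [e]
      have p1 := hπ's τ a1
      have p2 := hcmp ∅ ρ₁ a3 (by
        intro x hx hx2
        obtain ⟨b1, b2⟩ := hs3 x hx2
        have hxF := hρF x b2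
        exact (b1 (hWO ⟨hx, hxF, hfD x hxF (hρ.2 x b2).2⟩)).elim)
      simp only [Finset.card_empty, Nat.cast_zero, mul_zero, neg_zero] at p2
      exact add_nonneg p1 p2

lemma add_HP {F : Set V} (u : V) (hF : HP G F) : HP G (insert u F) := by
  intro W hW
  by_cases hu : u ∈ W
  · have hW' : W \ {u} ⊆ F := by
      rintro x ⟨hx, hxu⟩; exact (hW hx).resolve_left hxu
    have : W = insert u (W \ {u}) := by
      rw [insert_diff_singleton, insert_eq_of_mem hu]
    rw [this]
    by_cases hf : (G.neighborSet u).Finite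
    · exact add_fin (hF _ hW') hf
    · exact add_inf (fun X hX => hF X (hX.trans hW')) hf
  · refine hF W fun x hx => (hW hx).resolve_left ?_
    rintro rfl; exact hu hx

def rel (G : SimpleGraph V) (A : Set V) (a b : V) : Prop := G.Adj a b ∧ a ∈ A ∧ b ∈ A

def Rch (G : SimpleGraph V) (A : Set V) (x : V) : Set V := {y | Relation.ReflTransGen (rel G A) x y}

lemma Rch_symm {A : Set V} {x y : V} (h : y ∈ Rch G A x) : x ∈ Rch G A y :=
  haveI : Std.Symm (rel G A) := ⟨fun _ _ h => ⟨h.1.symm, h.2.2, h.2.1⟩⟩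
  Relation.ReflTransGen.stdSymm.symm _ _ h

lemma Rch_eq {A : Set V} {x y : V} (h : y ∈ Rch G A x) : Rch G A y = Rch G A x := by
  ext z
  exact ⟨fun hz => Relation.ReflTransGen.trans h hz, fun hz => Relation.ReflTransGen.trans (Rch_symm h) hz⟩

lemma step {A : Set V} {v : V} (h : ¬ HP G (Rch G A v)) :
    ∃ w, w ∈ A ∧ w ≠ v ∧ G.Adj v w ∧ ¬ HP G (Rch G (A \ {v}) w) := by
  by_contra! hc
  apply h
  have key : ∀ y ∈ Rch G A v, y = v ∨ ∃ w, w ∈ A ∧ w ≠ v ∧ G.Adj v w ∧ y ∈ Rch G (A \ {v}) w := by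
    intro y hy
    induction hy with
    | refl => exact Or.inl rfl
    | @tail b c _ hbc ih =>
      by_cases hcv : c = v
      · exact Or.inl hcv
      right
      rcases ih with rfl | ⟨w, hw, hwv, ha, hb⟩
      · exact ⟨c, hbc.2.2, hcv, hbc.1, Relation.ReflTransGen.refl⟩
      · by_cases hbv : b = v
        · subst hbv
          exact ⟨c, hbc.2.2, hcv, hbc.1, Relation.ReflTransGen.refl⟩
        · exact ⟨w, hw, hwv, ha, Relation.ReflTransGen.tail hb ⟨hbc.1, ⟨hbc.2.1, hbv⟩, hbc.2.2, hcv⟩⟩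
  have hsub : Rch G A v ⊆ insert v (Rch G A v \ {v}) := by
    rw [insert_diff_singleton]; exact subset_insert _ _
  have : HP G (insert v (Rch G A v \ {v})) := by
    apply add_HP
    refine union_HP (fun x => Rch G (A \ {v}) x) ?_ (fun x _ => Relation.ReflTransGen.refl)
      (fun x _ y _ hy => Rch_eq hy) ?_
    · rintro x ⟨hx, hxv⟩
      obtain ⟨w, hw, hwv, ha, hxw⟩ := (key x hx).resolve_left hxv
      change HP G (Rch G (A \ {v}) x)
      rw [Rch_eq hxw]
      exact hc w hw hwv ha
    · have hA : ∀ x ∈ Rch G A v \ {v}, x ∈ A \ {v} := by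
        rintro x ⟨hx, hxv⟩
        refine ⟨?_, hxv⟩
        rcases Relation.ReflTransGen.cases_tail hx with h | ⟨b, _, hb⟩
        · exact (hxv h).elim
        · exact hb.2.2
      intro x hx y hy ha
      exact Rch_eq (Relation.ReflTransGen.single ⟨ha, hA x hx, hA y hy⟩)
  exact fun W hW => this W (hW.trans hsub)

lemma hp_univ (hray : ¬ HasRay G) : HP G (univ : Set V) := by
  by_contra hno
  have h0 : ∃ v, ¬ HP G (Rch G univ v) := by
    by_contra! hc
    exact hno (union_HP (fun x => Rch G univ x) (fun x _ => hc x)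
      (fun x _ => Relation.ReflTransGen.refl) (fun x _ y _ hy => Rch_eq hy)
      (fun x _ y _ ha => Rch_eq (Relation.ReflTransGen.single ⟨ha, mem_univ _, mem_univ _⟩)))
  obtain ⟨v0, hv0⟩ := h0
  let St := {s : Set V × V // s.2 ∈ s.1 ∧ ¬ HP G (Rch G s.1 s.2)}
  have hst : ∀ s : St, ∃ t : St, t.1.1 = s.1.1 \ {s.1.2} ∧ G.Adj s.1.2 t.1.2 := by
    rintro ⟨⟨A, v⟩, hv, hs⟩
    obtain ⟨w, hw, hwv, ha, hn⟩ := step hs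
    exact ⟨⟨⟨A \ {v}, w⟩, ⟨hw, hwv⟩, hn⟩, rfl, ha⟩
  choose f hf1 hf2 using hst
  let s : ℕ → St := fun n => Nat.rec ⟨⟨univ, v0⟩, mem_univ _, hv0⟩ (fun _ t => f t) n
  have hs : ∀ n, s (n+1) = f (s n) := fun n => rfl
  have hanti : Antitone fun n => (s n).1.1 := by
    refine antitone_nat_of_succ_le fun n => ?_
    change (s (n+1)).1.1 ⊆ (s n).1.1
    rw [hs, hf1]; exact diff_subset
  have hne : ∀ m n, m < n → (s m).1.2 ≠ (s n).1.2 := by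
    intro m n hmn he
    have h1 : (s n).1.2 ∈ (s (m+1)).1.1 := hanti (Nat.succ_le_of_lt hmn) (s n).2.1
    rw [hs, hf1] at h1
    exact h1.2 he.symm
  refine hray ⟨fun n => (s n).1.2, ?_, fun n => ?_⟩
  · intro m n he
    rcases lt_trichotomy m n with h | h | h
    · exact (hne m n h he).elim
    · exact h
    · exact (hne n m h he.symm).elim
  · change G.Adj (s n).1.2 (s (n+1)).1.2
    rw [hs]; exact hf2 _

end RU

/-- Every rayless graph admits an unfriendly partition. -/
theorem rayless_unfriendly {V : Type*} (G : SimpleGraph V) (hray : ¬ HasRay G) :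
    ∃ π : V → Bool, Unfriendly G π := by
  obtain ⟨π, _, hi, hs⟩ := RU.hp_univ hray Set.univ subset_rfl (fun _ => true)
  refine ⟨π, fun x => ?_⟩
  by_cases hf : (G.neighborSet x).Finite
  · exact RU.fin_happy hs (Set.mem_univ x) hf
  · exact hi x (Set.mem_univ x) hf
end

section
/- If 𝒰 is a finitely closed class of graphs all of whose members are pre-partitionable, then every graph in the Schmidt closure of 𝒰 is pre-partitionable. -/
open Cardinal

/-- A graph is pre-partitionable if every two-colouring of any vertex subset `U` extends to a
two-colouring of the whole graph in which every vertex outside `U` is happy. -/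
def PrePartitionable {V : Type*} (G : SimpleGraph V) : Prop :=
  ∀ (U : Set V) (π : U → Bool), ∃ π' : V → Bool,
    (∀ u : U, π' u = π u) ∧ ∀ x ∉ U, Happy G π' x

universe u

/-- A class of graphs: a predicate on simple graphs over arbitrary vertex types in universe `u`. -/
def GraphClass : Type (u + 1) := ∀ (V : Type u), SimpleGraph V → Prop

/-- The component graph: the subgraph of `G` induced by a connected component `C` of `G - S`. -/
def CompGraph {V : Type u} (G : SimpleGraph V) (S : Set V)
    (C : (G.induce Sᶜ).ConnectedComponent) : SimpleGraph C.supp :=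
  (G.induce Sᶜ).induce C.supp

/-- The Schmidt hierarchy: `SchmidtLevel 𝒰 0 = 𝒰`, and for `μ > 0` a graph `G` lies in
`SchmidtLevel 𝒰 μ` iff there is a finite vertex set `S` such that every component of `G - S`
lies in `SchmidtLevel 𝒰 lam` for some `lam < μ`. -/
noncomputable def SchmidtLevel (𝒰 : GraphClass.{u}) (μ : Ordinal.{u}) : GraphClass.{u} :=
  fun V G =>
    if μ = 0 then 𝒰 V G
    else ∃ S : Set V, S.Finite ∧
      ∀ C : (G.induce Sᶜ).ConnectedComponent,
        ∃ lam : Ordinal.{u}, ∃ _ : lam < μ, SchmidtLevel 𝒰 lam C.supp (CompGraph G S C)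
  termination_by μ
  decreasing_by exact ‹_›

/-- A graph belongs to the Schmidt closure of `𝒰` if it lies in some level of the hierarchy. -/
def InSchmidtClosure (𝒰 : GraphClass.{u}) {V : Type u} (G : SimpleGraph V) : Prop :=
  ∃ μ : Ordinal.{u}, SchmidtLevel 𝒰 μ V G

/-- The rank of a graph in the Schmidt closure: the least level containing it. -/
noncomputable def SchmidtRank (𝒰 : GraphClass.{u}) {V : Type u} (G : SimpleGraph V) :
    Ordinal.{u} :=
  sInf {μ : Ordinal.{u} | SchmidtLevel 𝒰 μ V G}

/-- A class of graphs is finitely closed: it is closed under isomorphism, under finite (binary)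
disjoint unions, and under adding finitely many new vertices joined arbitrarily to each other
and to the old vertices. -/
structure FinitelyClosed (𝒰 : GraphClass.{u}) : Prop where
  iso_closed : ∀ {V W : Type u} (G : SimpleGraph V) (H : SimpleGraph W),
    Nonempty (G ≃g H) → 𝒰 V G → 𝒰 W H
  sum_mem : ∀ {V W : Type u} (G : SimpleGraph V) (H : SimpleGraph W),
    𝒰 V G → 𝒰 W H → 𝒰 (V ⊕ W) (G.sum H)
  addFinite_mem : ∀ {V : Type u} (G : SimpleGraph V) (T : Set V),
    T.Finite → 𝒰 (↑Tᶜ) (G.induce Tᶜ) → 𝒰 V G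

namespace SchmidtAux

theorem happy_mono {V : Type u} {G G' : SimpleGraph V} {π π' : V → Bool} {x : V}
    (h : Happy G π x)
    (h1 : ∀ y, G'.Adj x y → π' y = π' x → G.Adj x y ∧ π y = π x)
    (h2 : ∀ y, G.Adj x y → π y ≠ π x → G'.Adj x y ∧ π' y ≠ π' x) : Happy G' π' x := by
  unfold Happy at *
  refine le_trans (mk_le_mk_of_subset ?_) (le_trans h (mk_le_mk_of_subset ?_))
  · rintro y ⟨a, b⟩; exact h1 y a b
  · rintro y ⟨a, b⟩; exact h2 y a b

/-- restrict edges to a vertex set -/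
def res {V : Type u} (G : SimpleGraph V) (A : Set V) : SimpleGraph V where
  Adj x y := G.Adj x y ∧ x ∈ A ∧ y ∈ A
  symm := ⟨fun _ _ h => ⟨h.1.symm, h.2.2, h.2.1⟩⟩
  loopless := ⟨fun _ h => G.loopless.irrefl _ h.1⟩

theorem res_res {V : Type u} (G : SimpleGraph V) (A B : Set V) :
    res (res G A) B = res G (A ∩ B) := by
  ext x y; simp only [res, Set.mem_inter_iff]; tauto

theorem res_univ {V : Type u} (G : SimpleGraph V) : res G Set.univ = G := by
  ext x y; simp [res]

theorem pp_res_of_induce {V : Type u} (G : SimpleGraph V) (A : Set V)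
    (h : PrePartitionable (G.induce A)) : PrePartitionable (res G A) := by
  classical
  intro U π
  obtain ⟨p, hp1, hp2⟩ := h {a | a.1 ∈ U} (fun a => π ⟨a.1.1, a.2⟩)
  refine ⟨fun x => if hx : x ∈ U then π ⟨x, hx⟩ else if hA : x ∈ A then p ⟨x, hA⟩ else true,
    fun u => by simp, fun x hx => ?_⟩
  set q : V → Bool := fun x => if hx : x ∈ U then π ⟨x, hx⟩ else
    if hA : x ∈ A then p ⟨x, hA⟩ else true with hq
  have hqa : ∀ a : A, q a = p a := by
    intro a
    by_cases ha : a.1 ∈ U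
    · have := hp1 ⟨a, ha⟩
      simp [hq, ha, this]
    · simp [hq, ha]
  by_cases hA : x ∈ A
  · have := hp2 ⟨x, hA⟩ hx
    unfold Happy at this ⊢
    have key : ∀ R : Bool → Bool → Prop,
        #{y : V | (res G A).Adj x y ∧ R (q y) (q x)} =
        #{y : A | (G.induce A).Adj ⟨x, hA⟩ y ∧ R (p y) (p ⟨x, hA⟩)} := by
      intro R
      have : {y : V | (res G A).Adj x y ∧ R (q y) (q x)} =
        Subtype.val '' {y : A | (G.induce A).Adj ⟨x, hA⟩ y ∧ R (p y) (p ⟨x, hA⟩)} := by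
        ext y
        simp only [Set.mem_ofPred_eq, Set.mem_image]
        constructor
        · rintro ⟨⟨h1, h2, h3⟩, h4⟩
          refine ⟨⟨y, h3⟩, ⟨h1, ?_⟩, rfl⟩
          rw [← hqa, ← hqa]; exact h4
        · rintro ⟨⟨y, h3⟩, ⟨h1, h4⟩, rfl⟩
          refine ⟨⟨h1, hA, h3⟩, ?_⟩
          rw [← hqa, ← hqa] at h4; exact h4
      rw [this, mk_image_eq Subtype.val_injective]
    rw [key (fun a b => a = b), key (fun a b => a ≠ b)]
    exact this
  · unfold Happy
    have : {y : V | (res G A).Adj x y ∧ q y = q x} = ∅ := by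
      ext y; simp [res, hA]
    rw [this]; simp

theorem pp_finite {V : Type u} [Finite V] (G : SimpleGraph V) : PrePartitionable G := by
  classical
  have := Fintype.ofFinite V
  intro U π
  let E : (V → Bool) → ℕ := fun q => ∑ x, ∑ y, if G.Adj x y ∧ q x ≠ q y then 1 else 0
  let X : Finset (V → Bool) := Finset.univ.filter (fun q => ∀ u : U, q u = π u)
  have hX : X.Nonempty := ⟨fun x => if hx : x ∈ U then π ⟨x, hx⟩ else true, by simp +contextual [X]⟩
  obtain ⟨p, hp, hmax⟩ := X.exists_max_image E hX
  have hp' : ∀ u : U, p u = π u := by simpa [X] using hp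
  refine ⟨p, hp', fun x hx => ?_⟩
  let q := Function.update p x (!p x)
  have hqX : q ∈ X := by
    simp only [X, Finset.mem_filter, Finset.mem_univ, true_and]
    intro u
    have : u.1 ≠ x := by rintro rfl; exact hx u.2
    simp [q, this, hp']
  have hle := hmax q hqX
  have split : ∀ r : V → Bool, E r = 2 * (∑ y, if G.Adj x y ∧ r x ≠ r y then 1 else 0) +
      ∑ a ∈ Finset.univ.erase x, ∑ b ∈ Finset.univ.erase x,
        if G.Adj a b ∧ r a ≠ r b then 1 else 0 := by
    intro r
    simp only [E]
    rw [← Finset.add_sum_erase _ _ (Finset.mem_univ x)]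
    have : ∀ a, (∑ y, if G.Adj a y ∧ r a ≠ r y then 1 else 0) =
        (if G.Adj x a ∧ r x ≠ r a then 1 else 0) + ∑ b ∈ Finset.univ.erase x,
        if G.Adj a b ∧ r a ≠ r b then 1 else 0 := by
      intro a
      rw [← Finset.add_sum_erase _ _ (Finset.mem_univ x)]
      simp only [G.adj_comm a x, ne_comm (a := r a) (b := r x)]
    rw [Finset.sum_congr rfl (fun a _ => this a), Finset.sum_add_distrib]
    have h2 : (∑ y, if G.Adj x y ∧ r x ≠ r y then 1 else 0) =
      ∑ y ∈ Finset.univ.erase x, if G.Adj x y ∧ r x ≠ r y then 1 else 0 := by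
      rw [← Finset.add_sum_erase _ _ (Finset.mem_univ x)]
      simp
    rw [h2]; ring
  rw [split, split] at hle
  have hrest : ∑ a ∈ Finset.univ.erase x, ∑ b ∈ Finset.univ.erase x,
        (if G.Adj a b ∧ q a ≠ q b then 1 else 0) = ∑ a ∈ Finset.univ.erase x,
        ∑ b ∈ Finset.univ.erase x, if G.Adj a b ∧ p a ≠ p b then 1 else 0 := by
    refine Finset.sum_congr rfl fun a ha => Finset.sum_congr rfl fun b hb => ?_
    simp [q, Finset.ne_of_mem_erase ha, Finset.ne_of_mem_erase hb]
  rw [hrest] at hle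
  have h3 : (∑ y, if G.Adj x y ∧ q x ≠ q y then 1 else 0) =
      ∑ y, if G.Adj x y ∧ p y = p x then 1 else 0 := by
    refine Finset.sum_congr rfl fun y _ => ?_
    by_cases hy : y = x
    · subst hy; simp
    · simp only [q, Function.update_self, Function.update_of_ne hy]
      cases p x <;> cases p y <;> simp
  have h4 : (∑ y, if G.Adj x y ∧ p x ≠ p y then 1 else 0) =
      ∑ y, if G.Adj x y ∧ p y ≠ p x then 1 else 0 := by
    simp only [ne_comm]
  rw [h3, h4] at hle
  have h5 : (∑ y, if G.Adj x y ∧ p y = p x then 1 else 0) ≤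
      ∑ y, if G.Adj x y ∧ p y ≠ p x then 1 else 0 := by omega
  unfold Happy
  simp only [Finset.sum_boole, Nat.cast_id] at h5
  rw [← Finset.coe_filter_univ, ← Finset.coe_filter_univ]
  simp only [Finset.coe_sort_coe, Cardinal.mk_coe_finset]
  exact_mod_cast h5

theorem happy_of_few_changes {V : Type u} {G : SimpleGraph V} {π π' : V → Bool} {x : V}
    {lam : Cardinal.{u}} (hlam : ℵ₀ ≤ lam) (h : Happy G π x) (hd : lam < #(G.neighborSet x))
    (W : Set V) (hW : #W ≤ lam) (hx : π' x = π x) (hπ : ∀ y ∉ W, π' y = π y) :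
    Happy G π' x := by
  unfold Happy at *
  set s := {y | G.Adj x y ∧ π y = π x}
  set o := {y | G.Adj x y ∧ π y ≠ π x}
  set s' := {y | G.Adj x y ∧ π' y = π' x}
  set o' := {y | G.Adj x y ∧ π' y ≠ π' x}
  have e1 : #(G.neighborSet x) ≤ #s + #o := by
    refine le_trans (mk_le_mk_of_subset ?_) (mk_union_le s o)
    intro y hy
    by_cases hc : π y = π x
    · exact Or.inl ⟨hy, hc⟩
    · exact Or.inr ⟨hy, hc⟩
  have e2 : lam < #o := by
    by_contra hc
    push Not at hc
    have := e1.trans (add_le_add (h.trans hc) hc)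
    rw [Cardinal.add_eq_self hlam] at this
    exact absurd this (not_le.2 hd)
  have e3 : #o ≤ #o' + lam := by
    refine le_trans (mk_le_mk_of_subset ?_) ((mk_union_le o' W).trans (add_le_add le_rfl hW))
    rintro y ⟨hy, hc⟩
    by_cases hyW : y ∈ W
    · exact Or.inr hyW
    · left; refine ⟨hy, ?_⟩; rw [hx, hπ y hyW]; exact hc
  have e4 : lam ≤ #o' := by
    by_contra hc
    push Not at hc
    have := e3.trans (add_le_add hc.le le_rfl)
    rw [Cardinal.add_eq_self hlam] at this
    exact absurd this (not_le.2 e2)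
  have e5 : #o' + lam = #o' := Cardinal.add_eq_left (hlam.trans e4) e4
  have e6 : #s' ≤ #s + lam := by
    refine le_trans (mk_le_mk_of_subset ?_) ((mk_union_le s W).trans (add_le_add le_rfl hW))
    rintro y ⟨hy, hc⟩
    by_cases hyW : y ∈ W
    · exact Or.inr hyW
    · left; refine ⟨hy, ?_⟩; rw [← hx, ← hπ y hyW]; exact hc
  calc #s' ≤ #s + lam := e6
    _ ≤ #o + lam := add_le_add h le_rfl
    _ ≤ (#o' + lam) + lam := add_le_add e3 le_rfl
    _ = #o' := by rw [e5, e5]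

/-- iterated successors -/
def closSeq {V : Type u} (r : V → V → Prop) (Y : Set V) : ℕ → Set V
  | 0 => Y
  | n + 1 => ⋃ x : closSeq r Y n, {y | r x y}

theorem exists_closure {V : Type u} (r : V → V → Prop) {lam : Cardinal.{u}} (hlam : ℵ₀ ≤ lam)
    (hr : ∀ x, #{y | r x y} ≤ lam) (Y : Set V) (hY : #Y ≤ lam) :
    ∃ W : Set V, Y ⊆ W ∧ (∀ x ∈ W, ∀ y, r x y → y ∈ W) ∧ #W ≤ lam := by
  let Z : ℕ → Set V := closSeq r Y
  have hZ : ∀ n, #(Z n) ≤ lam := by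
    intro n
    induction n with
    | zero => exact hY
    | succ n ih =>
      change #(⋃ x : Z n, {y | r x.1 y} : Set V) ≤ lam
      refine (mk_iUnion_le _).trans ?_
      refine (mul_le_mul' ih (ciSup_le' fun x : Z n => hr x.1)).trans ?_
      rw [Cardinal.mul_eq_self hlam]
  refine ⟨⋃ n, Z n, Set.subset_iUnion Z 0, ?_, ?_⟩
  · intro x hx y hxy
    obtain ⟨n, hn⟩ := Set.mem_iUnion.1 hx
    exact Set.mem_iUnion.2 ⟨n + 1, Set.mem_iUnion.2 ⟨⟨x, hn⟩, hxy⟩⟩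
  · have := mk_iUnion_le_lift (ι := ℕ) Z
    simp only [lift_uzero, mk_nat, lift_aleph0] at this
    refine this.trans ((mul_le_mul' hlam (ciSup_le' hZ)).trans ?_)
    rw [Cardinal.mul_eq_self hlam]

theorem uncountable_step {V : Type u} (G : SimpleGraph V) (U : Set V) (π : V → Bool) (s : V)
    (hs : s ∉ U) (hdeg : ℵ₀ < #(G.neighborSet s))
    (IH : ∀ U' : Set V, U ⊆ U' → s ∈ U' → ∀ q : V → Bool,
      ∃ p : V → Bool, (∀ u ∈ U', p u = q u) ∧ ∀ x ∉ U', Happy G p x) :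
    ∃ p : V → Bool, (∀ u ∈ U, p u = π u) ∧ ∀ x ∉ U, Happy G p x := by
  classical
  obtain ⟨p, hp1, hp2⟩ := IH (insert s U) (Set.subset_insert _ _) (Set.mem_insert _ _) π
  by_cases hh : Happy G p s
  · refine ⟨p, fun u hu => hp1 u (Set.mem_insert_of_mem _ hu), fun x hx => ?_⟩
    by_cases hxs : x = s
    · rwa [hxs]
    · exact hp2 x (by simp [hxs, hx])
  have hh0 := hh
  unfold Happy at hh
  push Not at hh
  set Y := {y | G.Adj s y ∧ p y ≠ p s} with hYdef
  set X := {y | G.Adj s y ∧ p y = p s}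
  set lam := max ℵ₀ #Y
  have e1 : #(G.neighborSet s) ≤ #X + #Y := by
    refine le_trans (mk_le_mk_of_subset ?_) (mk_union_le X Y)
    intro y hy
    by_cases hc : p y = p s
    · exact Or.inl ⟨hy, hc⟩
    · exact Or.inr ⟨hy, hc⟩
  have hX : ℵ₀ < #X := by
    by_contra hc
    push Not at hc
    have := e1.trans (add_le_add hc (hh.le.trans hc))
    rw [Cardinal.add_eq_self le_rfl] at this
    exact absurd this (not_le.2 hdeg)
  have hlam : ℵ₀ ≤ lam := le_max_left _ _
  have hlX : lam < #X := max_lt hX hh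
  have hls : lam < #(G.neighborSet s) := hlX.trans_le (mk_le_mk_of_subset fun y hy => hy.1)
  let D : Set V := {x | #(G.neighborSet x) ≤ lam}
  obtain ⟨W0, hW1, hW2, hW3⟩ := exists_closure (fun x y => x ∈ D ∧ G.Adj x y) hlam
    (by
      intro x
      by_cases hx : x ∈ D
      · exact (mk_le_mk_of_subset fun y hy => hy.2).trans hx
      · simp [hx]) Y (le_max_right _ _)
  let W := W0 ∩ D
  have hWc : #W ≤ lam := (mk_le_mk_of_subset Set.inter_subset_left).trans hW3
  have hsD : s ∉ D := not_le.2 hls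
  have hsW : s ∉ W := fun h => hsD h.2
  let p2 := Function.update p s (!p s)
  have hp2s : ∀ y, y ≠ s → p2 y = p y := fun y hy => Function.update_of_ne hy _ _
  have hp2s' : p2 s = !p s := Function.update_self _ _ _
  obtain ⟨p3, h31, h32⟩ := IH (U ∪ Wᶜ) Set.subset_union_left (Or.inr hsW) p2
  have hxs : ∀ x ∈ U, x ≠ s := by rintro x hx rfl; exact hs hx
  refine ⟨p3, fun u hu => ?_, fun x hx => ?_⟩
  · rw [h31 u (Or.inl hu), hp2s u (hxs u hu), hp1 u (Set.mem_insert_of_mem _ hu)]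
  by_cases hxW : x ∈ W
  · exact h32 x (by simp [hx, hxW])
  have hx3 : p3 x = p2 x := h31 x (Or.inr hxW)
  by_cases hxD : x ∈ D
  · have hxs : x ≠ s := by rintro rfl; exact hsD hxD
    have hxY : x ∉ Y := fun h => hxW ⟨hW1 h, hxD⟩
    have hn : ∀ y, G.Adj x y → p3 y = p2 y := by
      intro y hy
      refine h31 y (Or.inr fun hyW => hxW ⟨hW2 y hyW.1 x ⟨hyW.2, hy.symm⟩, hxD⟩)
    refine happy_mono (hp2 x (by simp [hxs, hx])) ?_ ?_
    · intro y hy hc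
      refine ⟨hy, ?_⟩
      rw [hn y hy, hx3, hp2s x hxs] at hc
      by_cases hys : y = s
      · subst hys
        rw [hp2s'] at hc
        exact absurd ⟨hy.symm, by rw [← hc]; simp⟩ hxY
      · rwa [hp2s y hys] at hc
    · intro y hy hc
      refine ⟨hy, ?_⟩
      rw [hn y hy, hx3, hp2s x hxs]
      by_cases hys : y = s
      · subst hys
        exact absurd ⟨hy.symm, hc.symm⟩ hxY
      · rwa [hp2s y hys]
  · have hxd : lam < #(G.neighborSet x) := not_le.1 hxD
    by_cases hxs : x = s
    · subst hxs
      refine happy_of_few_changes (π := p2) hlam ?_ hxd W hWc hx3 (fun y hy => h31 y (Or.inr hy))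
      unfold Happy
      refine le_trans (mk_le_mk_of_subset (t := Y) ?_)
        (hh.le.trans (mk_le_mk_of_subset (s := X) ?_))
      · rintro y ⟨hy, hc⟩
        rw [hp2s', hp2s y hy.ne'] at hc
        exact ⟨hy, by rw [hc]; simp⟩
      · rintro y ⟨hy, hc⟩
        refine ⟨hy, ?_⟩
        rw [hp2s', hp2s y hy.ne', hc]; simp
    · refine happy_of_few_changes (π := p) hlam (hp2 x (by simp [hxs, hx])) hxd (insert s W)
        ?_ (by rw [hx3, hp2s x hxs]) ?_
      · refine mk_insert_le.trans ((add_le_add hWc (one_le_aleph0.trans hlam)).trans ?_)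
        rw [Cardinal.add_eq_self hlam]
      · intro y hy
        simp only [Set.mem_insert_iff, not_or] at hy
        rw [h31 y (Or.inr hy.2), hp2s y hy.1]

theorem exists_inj {T ι : Type*} [Countable T] (J : T → Set ι) (hJ : ∀ t, (J t).Infinite) :
    ∃ f : T → ι, Function.Injective f ∧ ∀ t, f t ∈ J t := by
  classical
  have := Encodable.ofCountable T
  choose M hM1 hM2 using fun t => (hJ t).exists_subset_card_eq (Encodable.encode t + 1)
  obtain ⟨f, hf1, hf2⟩ := (Finset.all_card_le_biUnion_card_iff_exists_injective M).1 (by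
    intro s
    rcases s.eq_empty_or_nonempty with rfl | hs
    · simp
    obtain ⟨m, hm, hmax⟩ := s.exists_max_image Encodable.encode hs
    calc s.card = (s.image Encodable.encode).card :=
          (Finset.card_image_of_injective _ Encodable.encode_injective).symm
      _ ≤ (Finset.range (Encodable.encode m + 1)).card := by
          refine Finset.card_le_card fun k hk => ?_
          obtain ⟨x, hx, rfl⟩ := Finset.mem_image.1 hk
          exact Finset.mem_range.2 (Nat.lt_succ_of_le (hmax x hx))
      _ = (M m).card := by rw [hM2]; simp
      _ ≤ _ := Finset.card_le_card (Finset.subset_biUnion_of_mem M hm))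
  exact ⟨f, hf1, fun t => hM1 t (hf2 t)⟩


theorem countable_step {V : Type u} {ι : Type u} (G : SimpleGraph V) (S : Set V) (hS : S.Finite)
    (c : V → ι) (hc : ∀ x y, x ∉ S → y ∉ S → G.Adj x y → c x = c y)
    (hF : ∀ F : Finset ι, PrePartitionable (res G (S ∪ {x | c x ∈ F})))
    (U : Set V) (π : V → Bool) (hcount : ∀ t ∈ S, t ∉ U → #(G.neighborSet t) ≤ ℵ₀) :
    ∃ p : V → Bool, (∀ u ∈ U, p u = π u) ∧ ∀ x ∉ U, Happy G p x := by
  classical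
  have hF' : ∀ F : Finset ι, ∃ p : V → Bool, (∀ u ∈ U, p u = π u) ∧
      ∀ x ∉ U, Happy (res G (S ∪ {x | c x ∈ F})) p x := by
    intro F
    obtain ⟨p, h1, h2⟩ := hF F U (fun u => π u)
    exact ⟨p, fun u hu => h1 ⟨u, hu⟩, h2⟩
  choose p hpU hpH using hF'
  -- pigeonhole
  have hσ : ∃ σ : V → Bool, ∀ F0 : Finset ι, ∃ F, F0 ⊆ F ∧ ∀ x ∈ S, p F x = σ x := by
    have : Finite S := hS
    have := Fintype.ofFinite S
    by_contra hcon
    push Not at hcon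
    choose B hB using hcon
    let ex : (S → Bool) → V → Bool := fun τ x => if hx : x ∈ S then τ ⟨x, hx⟩ else true
    let F := (Finset.univ : Finset (S → Bool)).biUnion (fun τ => B (ex τ))
    obtain ⟨x, hx, hne⟩ := hB (ex (fun x => p F x)) F
      (Finset.subset_biUnion_of_mem (fun τ => B (ex τ)) (Finset.mem_univ (fun x : S => p F x.1)))
    apply hne
    simp [ex, hx]
  obtain ⟨σ, hσ⟩ := hσ
  let Good : ι → (V → Bool) → Prop := fun i e => (∀ x ∈ S, e x = σ x) ∧ (∀ u ∈ U, e u = π u) ∧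
    ∀ x, c x = i → x ∉ S → x ∉ U → Happy G e x
  have hgood : ∀ F, (∀ x ∈ S, p F x = σ x) → ∀ i ∈ F, Good i (p F) := by
    intro F hFσ i hi
    refine ⟨hFσ, hpU F, fun x hxi hxS hxU => happy_mono (hpH F x hxU) ?_ ?_⟩
    · intro y hy hyc
      refine ⟨⟨hy, Or.inr (by simpa [hxi] using hi), ?_⟩, hyc⟩
      by_cases hyS : y ∈ S
      · exact Or.inl hyS
      · right
        change c y ∈ F
        rw [← hc x y hxS hyS hy, hxi]; exact hi
    · intro y hy hyc
      exact ⟨hy.1, hyc⟩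
  have hgoodE : ∀ i, ∃ e, Good i e := by
    intro i
    obtain ⟨F, h1, h2⟩ := hσ {i}
    exact ⟨p F, hgood F h2 i (h1 (by simp))⟩
  let TA : V → Prop := fun t => ∃ F : Finset ι, ∀ y, G.Adj t y → y ∈ S ∨ c y ∈ F
  let TB : V → Prop := fun t => ∃ i, {y | G.Adj t y ∧ c y = i}.Infinite
  let J : V → Set ι := fun t => {i | ∃ e, Good i e ∧ ∃ y, G.Adj t y ∧ y ∉ S ∧ c y = i ∧ e y ≠ σ t}
  have hJ : ∀ t ∈ S, t ∉ U → ¬ TA t → ¬ TB t → (J t).Infinite := by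
    intro t htS htU hA hB hJf
    have hJf : (J t).Finite := by simpa using hJf
    have hB' : ∀ i, {y | G.Adj t y ∧ c y = i}.Finite := by
      intro i; by_contra h; exact hB ⟨i, h⟩
    have hK : (S ∪ ⋃ i ∈ J t, {y | G.Adj t y ∧ c y = i}).Finite :=
      hS.union (hJf.biUnion fun i _ => hB' i)
    set K := S ∪ ⋃ i ∈ J t, {y | G.Adj t y ∧ c y = i}
    have hN : (G.neighborSet t).Infinite := by
      intro hfin
      apply hA
      refine ⟨hfin.toFinset.image c, fun y hy => Or.inr ?_⟩
      exact Finset.mem_image_of_mem _ (by simpa using hy)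
    obtain ⟨M, hM1, hM2⟩ := hN.exists_subset_card_eq (2 * hK.toFinset.card + 1)
    obtain ⟨F, hF1, hF2⟩ := hσ (M.image c)
    have hh := hpH F t htU
    unfold Happy at hh
    set o := {y | (res G (S ∪ {x | c x ∈ F})).Adj t y ∧ p F y ≠ p F t}
    set s := {y | (res G (S ∪ {x | c x ∈ F})).Adj t y ∧ p F y = p F t}
    have hoK : o ⊆ K := by
      rintro y ⟨⟨hy, -, hyF⟩, hne⟩
      by_cases hyS : y ∈ S
      · exact Or.inl hyS
      · have hyF : c y ∈ F := hyF.resolve_left hyS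
        right
        refine Set.mem_biUnion (x := c y) ?_ ⟨hy, rfl⟩
        exact ⟨p F, hgood F hF2 _ hyF, y, hy, hyS, rfl, by rw [← hF2 t htS]; exact hne⟩
    have hMs : (M : Set V) ⊆ s ∪ o := by
      intro y hy
      have had : (res G (S ∪ {x | c x ∈ F})).Adj t y :=
        ⟨hM1 hy, Or.inl htS, Or.inr (hF1 (Finset.mem_image_of_mem c hy))⟩
      by_cases hcy : p F y = p F t
      · exact Or.inl ⟨had, hcy⟩
      · exact Or.inr ⟨had, hcy⟩
    have hoc : #o ≤ (hK.toFinset.card : Cardinal) := by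
      have := mk_le_mk_of_subset hoK
      rwa [← hK.coe_toFinset, Finset.coe_sort_coe, Cardinal.mk_coe_finset] at this
    have hMc : #(M : Set V) ≤ #s + #o := (mk_le_mk_of_subset hMs).trans (mk_union_le _ _)
    rw [Finset.coe_sort_coe, Cardinal.mk_coe_finset, hM2] at hMc
    have := hMc.trans (add_le_add (hh.trans hoc) hoc)
    norm_cast at this
    omega
  -- collect F0
  have hFt : ∀ t, ∃ F : Finset ι, (TA t → ∀ y, G.Adj t y → y ∈ S ∨ c y ∈ F) ∧
      (¬ TA t → TB t → ∃ i ∈ F, {y | G.Adj t y ∧ c y = i}.Infinite) := by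
    intro t
    by_cases hA : TA t
    · obtain ⟨F, h⟩ := id hA
      exact ⟨F, fun _ => h, fun h => absurd hA h⟩
    · by_cases hB : TB t
      · obtain ⟨i, hi⟩ := id hB
        exact ⟨{i}, fun h => absurd h hA, fun _ _ => ⟨i, by simp, hi⟩⟩
      · exact ⟨∅, fun h => absurd h hA, fun _ h => absurd h hB⟩
  choose Ft hFt1 hFt2 using hFt
  obtain ⟨F0, hF0, hF0σ⟩ := hσ (hS.toFinset.biUnion Ft)
  have hFtF0 : ∀ t ∈ S, Ft t ⊆ F0 := fun t ht =>
    (Finset.subset_biUnion_of_mem Ft (by simpa using ht)).trans hF0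
  let T := {t : V // t ∈ S ∧ t ∉ U ∧ ¬ TA t ∧ ¬ TB t}
  have hTf : Finite T := Set.Finite.subset hS (fun t (ht : t ∈ S ∧ t ∉ U ∧ ¬ TA t ∧ ¬ TB t) => ht.1)
  obtain ⟨f, hfi, hfJ⟩ := exists_inj (T := T × ℕ) (fun x => J x.1.1 \ (F0 : Set ι)) (fun x =>
    (hJ x.1.1 x.1.2.1 x.1.2.2.1 x.1.2.2.2.1 x.1.2.2.2.2).sdiff F0.finite_toSet)
  have hext : ∀ i, ∃ e, Good i e ∧ ∀ x, f x = i →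
      ∃ y, G.Adj x.1.1 y ∧ y ∉ S ∧ c y = i ∧ e y ≠ σ x.1.1 := by
    intro i
    by_cases h : ∃ x, f x = i
    · obtain ⟨x, rfl⟩ := h
      obtain ⟨e, he, hy⟩ := (hfJ x).1
      refine ⟨e, he, fun x' hx' => ?_⟩
      rw [hfi hx']; exact hy
    · obtain ⟨e, he⟩ := hgoodE i
      exact ⟨e, he, fun x hx => absurd ⟨x, hx⟩ h⟩
  choose e heG heO using hext
  let χ : V → Bool := fun x => if x ∈ S then σ x else if c x ∈ F0 then p F0 x else e (c x) x
  have χS : ∀ x ∈ S, χ x = σ x := fun x hx => by simp [χ, hx]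
  have χF : ∀ x, (x ∈ S ∨ c x ∈ F0) → χ x = p F0 x := by
    intro x hx
    by_cases hxS : x ∈ S
    · rw [χS x hxS, hF0σ x hxS]
    · simp [χ, hxS, hx.resolve_left hxS]
  have χE : ∀ i, i ∉ F0 → ∀ x, (x ∈ S ∨ c x = i) → χ x = e i x := by
    intro i hi x hx
    by_cases hxS : x ∈ S
    · rw [χS x hxS, (heG i).1 x hxS]
    · have := hx.resolve_left hxS
      subst this
      simp [χ, hxS, hi]
  have inf_happy : ∀ t ∈ S, t ∉ U → {y | G.Adj t y ∧ χ y ≠ χ t}.Infinite → Happy G χ t := by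
    intro t ht htU hinf
    unfold Happy
    refine le_trans ((mk_le_mk_of_subset fun y hy => hy.1).trans (hcount t ht htU)) ?_
    rw [Cardinal.aleph0_le_mk_iff]
    exact hinf.to_subtype
  refine ⟨χ, ?_, ?_⟩
  · intro u hu
    by_cases h : u ∈ S ∨ c u ∈ F0
    · rw [χF u h, hpU F0 u hu]
    · push Not at h
      rw [χE (c u) h.2 u (Or.inr rfl), (heG _).2.1 u hu]
  intro x hxU
  by_cases hxS : x ∈ S
  · by_cases hA : TA x
    · have hn : ∀ y, G.Adj x y → y ∈ S ∨ c y ∈ F0 := fun y hy =>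
        (hFt1 x hA y hy).imp id (fun h => hFtF0 x hxS h)
      refine happy_mono (hpH F0 x hxU) ?_ ?_
      · intro y hy hyc
        rw [χF y (hn y hy), χF x (Or.inl hxS)] at hyc
        exact ⟨⟨hy, Or.inl hxS, hn y hy⟩, hyc⟩
      · rintro y ⟨hy, -, -⟩ hyc
        rw [χF y (hn y hy), χF x (Or.inl hxS)]
        exact ⟨hy, hyc⟩
    by_cases hB : TB x
    · apply inf_happy x hxS hxU
      obtain ⟨i, hi, hinf⟩ := hFt2 x hA hB
      have hi := hFtF0 x hxS hi
      have hh := hpH F0 x hxU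
      unfold Happy at hh
      set o := {y | (res G (S ∪ {x | c x ∈ F0})).Adj x y ∧ p F0 y ≠ p F0 x}
      set s := {y | (res G (S ∪ {x | c x ∈ F0})).Adj x y ∧ p F0 y = p F0 x}
      have ho : o.Infinite := by
        intro hof
        have hof : o.Finite := hof
        have hsf : s.Finite := by
          rw [← Cardinal.lt_aleph0_iff_set_finite] at hof ⊢
          exact hh.trans_lt hof
        refine hinf ((hsf.union hof).subset ?_)
        rintro y ⟨hy, hyi⟩
        have had : (res G (S ∪ {x | c x ∈ F0})).Adj x y :=
          ⟨hy, Or.inl hxS, Or.inr (by change c y ∈ F0; rw [hyi]; exact hi)⟩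
        by_cases hcy : p F0 y = p F0 x
        · exact Or.inl ⟨had, hcy⟩
        · exact Or.inr ⟨had, hcy⟩
      refine ho.mono ?_
      rintro y ⟨⟨hy, -, hyF⟩, hyc⟩
      refine ⟨hy, ?_⟩
      rw [χF y hyF, χF x (Or.inl hxS)]
      exact hyc
    · apply inf_happy x hxS hxU
      let t : T := ⟨x, hxS, hxU, hA, hB⟩
      choose y hy1 hy2 hy3 hy4 using fun n : ℕ => heO (f (t, n)) (t, n) rfl
      refine Set.infinite_of_injective_forall_mem (f := y) ?_ ?_
      · intro m n hmn
        have : f (t, m) = f (t, n) := by rw [← hy3 m, ← hy3 n, hmn]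
        exact (Prod.ext_iff.1 (hfi this)).2
      · intro n
        refine ⟨hy1 n, ?_⟩
        rw [χE (f (t, n)) (hfJ (t, n)).2 _ (Or.inr (hy3 n)), χS x hxS]
        exact hy4 n
  · have hn : ∀ y, G.Adj x y → y ∈ S ∨ c y = c x := by
      intro y hy
      by_cases hyS : y ∈ S
      · exact Or.inl hyS
      · exact Or.inr (hc x y hxS hyS hy).symm
    by_cases hxF : c x ∈ F0
    · have hn' : ∀ y, G.Adj x y → χ y = p F0 y := fun y hy =>
        χF y ((hn y hy).imp id (fun h => by rw [h]; exact hxF))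
      refine happy_mono ((hgood F0 hF0σ _ hxF).2.2 x rfl hxS hxU) ?_ ?_
      · intro y hy hyc
        rw [hn' y hy, χF x (Or.inr hxF)] at hyc
        exact ⟨hy, hyc⟩
      · intro y hy hyc
        rw [hn' y hy, χF x (Or.inr hxF)]
        exact ⟨hy, hyc⟩
    · have hn' : ∀ y, G.Adj x y → χ y = e (c x) y := fun y hy => χE _ hxF y (hn y hy)
      have hx' := χE _ hxF x (Or.inr rfl)
      refine happy_mono ((heG (c x)).2.2 x rfl hxS hxU) ?_ ?_
      · intro y hy hyc
        rw [hn' y hy, hx'] at hyc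
        exact ⟨hy, hyc⟩
      · intro y hy hyc
        rw [hn' y hy, hx']
        exact ⟨hy, hyc⟩

theorem main_step {V : Type u} {ι : Type u} (G : SimpleGraph V) (S : Set V) (hS : S.Finite)
    (c : V → ι) (hc : ∀ x y, x ∉ S → y ∉ S → G.Adj x y → c x = c y)
    (hF : ∀ F : Finset ι, PrePartitionable (res G (S ∪ {x | c x ∈ F}))) :
    PrePartitionable G := by
  classical
  have key : ∀ n : ℕ, ∀ U : Set V, (S \ U).ncard ≤ n → ∀ π : V → Bool,
      ∃ p : V → Bool, (∀ u ∈ U, p u = π u) ∧ ∀ x ∉ U, Happy G p x := by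
    intro n
    induction n with
    | zero =>
      intro U hU π
      refine countable_step G S hS c hc hF U π fun t ht htU => ?_
      have h0 : S \ U = ∅ := (Set.ncard_eq_zero hS.sdiff).1 (Nat.le_zero.1 hU)
      exact absurd (show t ∈ S \ U from ⟨ht, htU⟩) (by rw [h0]; simp)
    | succ n ih =>
      intro U hU π
      by_cases h : ∀ t ∈ S, t ∉ U → #(G.neighborSet t) ≤ ℵ₀
      · exact countable_step G S hS c hc hF U π h
      · push Not at h
        obtain ⟨s, hsS, hsU, hs⟩ := h
        refine uncountable_step G U π s hsU hs fun U' hUU' hsU' q => ih U' ?_ q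
        have : (S \ U').ncard < (S \ U).ncard := by
          refine Set.ncard_lt_ncard ?_ hS.sdiff
          refine ⟨Set.sdiff_subset_sdiff_right hUU', fun hsub => ?_⟩
          exact (hsub ⟨hsS, hsU⟩).2 hsU'
        omega
  intro U π
  obtain ⟨p, h1, h2⟩ := key _ U le_rfl (fun x => if hx : x ∈ U then π ⟨x, hx⟩ else true)
  exact ⟨p, fun u => by rw [h1 u u.2]; simp, h2⟩

/-- separated sets -/
def Sep {V : Type u} (G : SimpleGraph V) (A B : Set V) : Prop :=
  ∀ x ∈ A, ∀ y ∈ B, x ≠ y ∧ ¬ G.Adj x y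

/-- set version of the hierarchy -/
inductive L (𝒰 : GraphClass.{u}) {V : Type u} (G : SimpleGraph V) : Ordinal.{u} → Set V → Prop
  | base (μ : Ordinal.{u}) (A : Set V) : 𝒰 A (G.induce A) → L 𝒰 G μ A
  | step (μ : Ordinal.{u}) (A S : Set V) (ι : Type u) (P : ι → Set V) (r : ι → Ordinal.{u}) :
      S.Finite → A = S ∪ ⋃ i, P i → (∀ i j, i ≠ j → Sep G (P i) (P j)) → (∀ i, r i < μ) →
      (∀ i, L 𝒰 G (r i) (P i)) → L 𝒰 G μ A

theorem L_mono {𝒰 : GraphClass.{u}} {V : Type u} {G : SimpleGraph V} {lam μ : Ordinal.{u}}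
    (h : lam ≤ μ) {A : Set V} (hA : L 𝒰 G lam A) : L 𝒰 G μ A := by
  cases hA with
  | base _ _ h => exact L.base _ _ h
  | step _ _ S ι P r h1 h2 h3 h4 h5 =>
    exact L.step _ _ S ι P r h1 h2 h3 (fun i => (h4 i).trans_le h) h5

theorem level_L {𝒰 : GraphClass.{u}} (h𝒰 : FinitelyClosed 𝒰) {V : Type u} (G : SimpleGraph V)
    (μ : Ordinal.{u}) : ∀ (V' : Type u) (G' : SimpleGraph V'), SchmidtLevel 𝒰 μ V' G' →
      ∀ f : G' ↪g G, L 𝒰 G μ (Set.range f) := by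
  induction μ using WellFoundedLT.induction with
  | ind μ ih =>
    intro V' G' h f
    rw [SchmidtLevel] at h
    split_ifs at h with h0
    · exact L.base _ _ (h𝒰.iso_closed _ _ ⟨f.isoInduceRange⟩ h)
    · obtain ⟨S, hS, hC⟩ := h
      choose r hr hL using hC
      let g : ∀ C : (G'.induce Sᶜ).ConnectedComponent, CompGraph G' S C ↪g G := fun C =>
        f.comp ((SimpleGraph.Embedding.induce Sᶜ).comp (SimpleGraph.Embedding.induce C.supp))
      refine L.step _ _ (f '' S) _ (fun C => Set.range (g C)) r (hS.image f) ?_ ?_ hr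
        (fun C => ih _ (hr C) _ _ (hL C) (g C))
      · ext x
        constructor
        · rintro ⟨v, rfl⟩
          by_cases hv : v ∈ S
          · exact Or.inl ⟨v, hv, rfl⟩
          · right
            refine Set.mem_iUnion.2 ⟨(G'.induce Sᶜ).connectedComponentMk ⟨v, hv⟩, ?_⟩
            exact ⟨⟨⟨v, hv⟩, rfl⟩, rfl⟩
        · rintro (⟨v, -, rfl⟩ | h)
          · exact ⟨v, rfl⟩
          · obtain ⟨C, ⟨v, rfl⟩⟩ := Set.mem_iUnion.1 h
            exact ⟨v.1.1, rfl⟩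
      · rintro C D hCD _ ⟨v, rfl⟩ _ ⟨w, rfl⟩
        constructor
        · intro heq
          have : v.1.1 = w.1.1 := f.injective heq
          have : v.1 = w.1 := Subtype.ext this
          exact hCD (by rw [← v.2, ← w.2, this])
        · intro hadj
          have h1 : G'.Adj v.1.1 w.1.1 := f.map_adj_iff.1 hadj
          have h2 : (G'.induce Sᶜ).Adj v.1 w.1 := h1
          have := SimpleGraph.ConnectedComponent.sound h2.reachable
          exact hCD (by rw [← v.2, ← w.2]; exact this)

theorem U_union {𝒰 : GraphClass.{u}} (h𝒰 : FinitelyClosed 𝒰) {V : Type u} (G : SimpleGraph V)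
    (A B : Set V) (hA : 𝒰 A (G.induce A)) (hB : 𝒰 B (G.induce B)) (hs : Sep G A B) :
    𝒰 (A ∪ B : Set V) (G.induce (A ∪ B)) := by
  classical
  refine h𝒰.iso_closed _ _ ⟨?_⟩ (h𝒰.sum_mem _ _ hA hB)
  have hd : Disjoint A B := Set.disjoint_left.2 fun x hx hx' => (hs x hx x hx').1 rfl
  refine ⟨(Equiv.Set.union hd).symm, ?_⟩
  rintro (⟨a, ha⟩ | ⟨a, ha⟩) (⟨b, hb⟩ | ⟨b, hb⟩)
  · simp
  · simp [(hs a ha b hb).2]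
  · simpa using fun h => (hs b hb a ha).2 (G.symm.symm _ _ h)
  · simp

theorem pp_base {𝒰 : GraphClass.{u}} (h𝒰 : FinitelyClosed 𝒰)
    (hpp : ∀ (V : Type u) (G : SimpleGraph V), 𝒰 V G → PrePartitionable G)
    {V : Type u} (G : SimpleGraph V) (S : Set V) (hS : S.Finite) (κ : Type u) [Finite κ]
    (P : κ → Set V) (hsep : ∀ i j, i ≠ j → Sep G (P i) (P j))
    (hP : ∀ i, 𝒰 (P i) (G.induce (P i))) : PrePartitionable (res G (S ∪ ⋃ i, P i)) := by
  classical
  have := Fintype.ofFinite κ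
  apply pp_res_of_induce
  rcases isEmpty_or_nonempty κ with hκ | hκ
  · have : Finite (S ∪ ⋃ i, P i : Set V) := by
      simpa using hS.to_subtype
    exact pp_finite _
  · have key : ∀ F : Finset κ, F.Nonempty →
        𝒰 (⋃ i ∈ F, P i : Set V) (G.induce (⋃ i ∈ F, P i)) := by
      intro F hF
      induction hF using Finset.Nonempty.cons_induction with
      | singleton a => 
        have h : (⋃ i ∈ ({a} : Finset κ), P i) = P a := by simp
        rw [h]; exact hP a
      | cons a s ha hs ih =>
        have : (⋃ i ∈ Finset.cons a s ha, P i) = P a ∪ ⋃ i ∈ s, P i := by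
          ext x; simp
        rw [this]
        refine U_union h𝒰 G _ _ (hP a) ih ?_
        intro x hx y hy
        simp only [Set.mem_iUnion] at hy
        obtain ⟨i, hi, hy⟩ := hy
        exact hsep a i (by rintro rfl; exact ha hi) x hx y hy
    have h1 := key Finset.univ Finset.univ_nonempty
    have h1 : 𝒰 (⋃ i, P i : Set V) (G.induce (⋃ i, P i)) := by
      have h : (⋃ i ∈ (Finset.univ : Finset κ), P i) = ⋃ i, P i := by simp
      rw [h] at h1; exact h1
    apply hpp
    let Q : Set V := ⋃ i, P i
    let T : Set (S ∪ Q : Set V) := {x | x.1 ∉ Q}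
    refine h𝒰.addFinite_mem _ T ?_ ?_
    · refine Set.Finite.subset (hS.preimage (f := Subtype.val) Subtype.val_injective.injOn) ?_
      intro x hx
      exact x.2.resolve_right hx
    · refine h𝒰.iso_closed _ _ ⟨?_⟩ h1
      refine ⟨⟨fun x => ⟨⟨x.1, Or.inr x.2⟩, fun h => h x.2⟩,
        fun x => ⟨x.1.1, not_not.1 x.2⟩, fun x => rfl, fun x => rfl⟩, ?_⟩
      intro a b
      rfl

theorem claim {𝒰 : GraphClass.{u}} (h𝒰 : FinitelyClosed 𝒰)
    (hpp : ∀ (V : Type u) (G : SimpleGraph V), 𝒰 V G → PrePartitionable G)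
    {V : Type u} (G : SimpleGraph V) (μ : Ordinal.{u}) :
    ∀ (S : Set V), S.Finite → ∀ (κ : Type u) [Finite κ]
    (P : κ → Set V), (∀ i j, i ≠ j → Sep G (P i) (P j)) →
    (∀ i, L 𝒰 G μ (P i)) → PrePartitionable (res G (S ∪ ⋃ i, P i)) := by
  classical
  induction μ using WellFoundedLT.induction with
  | ind μ ih =>
    intro S hS κ _ P hsep hP
    have hdec : ∀ k, ∃ (S' : Set V) (ι : Type u) (Q : ι → Set V), S'.Finite ∧
        P k = S' ∪ ⋃ i, Q i ∧ (∀ i j, i ≠ j → Sep G (Q i) (Q j)) ∧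
        ∀ i, 𝒰 (Q i) (G.induce (Q i)) ∨ ∃ lam < μ, L 𝒰 G lam (Q i) := by
      intro k
      cases hP k with
      | base _ _ h =>
        exact ⟨∅, PUnit, fun _ => P k, Set.finite_empty, by simp [Set.iUnion_const],
          fun i j h => absurd rfl h, fun i => Or.inl h⟩
      | step _ _ S' ι Q r h1 h2 h3 h4 h5 =>
        exact ⟨S', ι, Q, h1, h2, h3, fun i => Or.inr ⟨r i, h4 i, h5 i⟩⟩
    choose S' ι Q hS' hPQ hQsep hQ using hdec
    let I := Σ k, ι k
    let R : I → Set V := fun a => Q a.1 a.2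
    have hRP : ∀ a : I, R a ⊆ P a.1 := by
      intro a x hx
      rw [hPQ]; exact Or.inr (Set.mem_iUnion.2 ⟨a.2, hx⟩)
    have hRsep : ∀ a b : I, a ≠ b → Sep G (R a) (R b) := by
      rintro ⟨k, i⟩ ⟨l, j⟩ hab
      by_cases hkl : k = l
      · subst hkl
        exact hQsep k i j (by rintro rfl; exact hab rfl)
      · intro x hx y hy
        exact hsep k l hkl x (hRP ⟨k, i⟩ hx) y (hRP ⟨l, j⟩ hy)
    let A := S ∪ ⋃ k, P k
    let T := S ∪ ⋃ k, S' k
    have hT : T.Finite := hS.union (Set.finite_iUnion hS')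
    have hTA : T ⊆ A := by
      rintro x (hx | hx)
      · exact Or.inl hx
      · obtain ⟨k, hk⟩ := Set.mem_iUnion.1 hx
        refine Or.inr (Set.mem_iUnion.2 ⟨k, ?_⟩)
        rw [hPQ]; exact Or.inl hk
    have hRA : ∀ a, R a ⊆ A := fun a x hx => Or.inr (Set.mem_iUnion.2 ⟨a.1, hRP a hx⟩)
    have hAT : ∀ x ∈ A, x ∉ T → ∃ a, x ∈ R a := by
      rintro x (hx | hx) hxT
      · exact absurd (Or.inl hx) hxT
      · obtain ⟨k, hk⟩ := Set.mem_iUnion.1 hx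
        rw [hPQ] at hk
        rcases hk with hk | hk
        · exact absurd (Or.inr (Set.mem_iUnion.2 ⟨k, hk⟩)) hxT
        · obtain ⟨i, hi⟩ := Set.mem_iUnion.1 hk
          exact ⟨⟨k, i⟩, hi⟩
    let c : V → Option I := fun x => if h : ∃ a, x ∈ R a then some h.choose else none
    have hcR : ∀ a, ∀ x ∈ R a, c x = some a := by
      intro a x hx
      have h : ∃ a, x ∈ R a := ⟨a, hx⟩
      simp only [c, h, dif_pos]
      by_contra hne
      have hne : h.choose ≠ a := fun h' => hne (by rw [h'])
      exact (hRsep _ _ hne x h.choose_spec x hx).1 rfl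
    refine main_step (res G A) T hT c ?_ ?_
    · rintro x y hx hy ⟨hxy, hxA, hyA⟩
      obtain ⟨a, ha⟩ := hAT x hxA hx
      obtain ⟨b, hb⟩ := hAT y hyA hy
      rw [hcR a x ha, hcR b y hb]
      by_contra hne
      exact (hRsep a b (fun h => hne (by rw [h])) x ha y hb).2 hxy
    · intro F
      rw [res_res]
      let κ' := {a : I // some a ∈ F}
      have : Finite κ' :=
        Finite.of_injective (fun a : κ' => (⟨some a.1, a.2⟩ : F)) (fun a b h => by
          have := congrArg Subtype.val h
          exact Subtype.ext (Option.some.inj this))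
      have hset : A ∩ (T ∪ {x | c x ∈ F}) = T ∪ ⋃ a : κ', R a.1 := by
        ext x
        constructor
        · rintro ⟨hxA, hx⟩
          by_cases hxT : x ∈ T
          · exact Or.inl hxT
          · obtain ⟨a, ha⟩ := hAT x hxA hxT
            have hxF : c x ∈ F := hx.resolve_left hxT
            rw [hcR a x ha] at hxF
            exact Or.inr (Set.mem_iUnion.2 ⟨⟨a, hxF⟩, ha⟩)
        · rintro (hx | hx)
          · exact ⟨hTA hx, Or.inl hx⟩
          · obtain ⟨a, ha⟩ := Set.mem_iUnion.1 hx
            refine ⟨hRA _ ha, Or.inr ?_⟩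
            change c x ∈ F
            rw [hcR _ x ha]; exact a.2
      rw [hset]
      have hsep' : ∀ a b : κ', a ≠ b → Sep G (R a.1) (R b.1) := fun a b hab =>
        hRsep _ _ (fun h => hab (Subtype.ext h))
      by_cases hμ : μ = 0
      · refine pp_base h𝒰 hpp G T hT κ' _ hsep' fun a => ?_
        rcases hQ a.1.1 a.1.2 with h | ⟨lam, h, -⟩
        · exact h
        · rw [hμ] at h; exact absurd h (not_lt.2 zero_le)
      · have hμ : 0 < μ := pos_iff_ne_zero.2 hμ
        have hl : ∀ a : κ', ∃ lam < μ, L 𝒰 G lam (R a.1) := by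
          intro a
          rcases hQ a.1.1 a.1.2 with h | h
          · exact ⟨0, hμ, L.base _ _ h⟩
          · exact h
        choose lam hlam hL using hl
        have := Fintype.ofFinite κ'
        have hν : Finset.univ.sup lam < μ :=
          (Finset.sup_lt_iff (by simpa using hμ)).2 fun a _ => hlam a
        exact ih _ hν T hT κ' _ hsep' fun a => L_mono (Finset.le_sup (Finset.mem_univ a)) (hL a)

end SchmidtAux

/-- Main theorem: if `𝒰` is a finitely closed class all of whose members are
pre-partitionable, then every graph in the Schmidt closure of `𝒰` is pre-partitionable. -/
theorem schmidtClosure_prePartitionable (𝒰 : GraphClass.{u}) (h𝒰 : FinitelyClosed 𝒰)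
    (hpp : ∀ (V : Type u) (G : SimpleGraph V), 𝒰 V G → PrePartitionable G)
    {V : Type u} (G : SimpleGraph V) (hG : InSchmidtClosure 𝒰 G) :
    PrePartitionable G := by

  obtain ⟨μ, hμ⟩ := hG
  have h := SchmidtAux.level_L h𝒰 G μ V G hμ (SimpleGraph.Embedding.refl)
  have h2 := SchmidtAux.claim h𝒰 hpp G μ ∅ Set.finite_empty PUnit
    (fun _ => Set.range (SimpleGraph.Embedding.refl (G := G)))
    (fun i j hij => absurd rfl hij) (fun _ => h)
  have h3 : (∅ ∪ ⋃ _ : PUnit, Set.range (SimpleGraph.Embedding.refl (G := G)) : Set V) =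
      Set.univ := by
    ext x
    simp only [Set.mem_union, Set.mem_iUnion, Set.mem_univ, iff_true]
    exact Or.inr ⟨PUnit.unit, x, rfl⟩
  rw [h3, SchmidtAux.res_univ] at h2
  exact h2
end

section
/- Let 𝒲 be the class of countable graphs G such that only finitely many vertices of infinite degree have finitely many neighbours of infinite degree. Every graph in 𝒲 admits an unfriendly partition. -/
open Cardinal

/-- The set of vertices of infinite degree in `G`. -/
def Vinf {V : Type*} (G : SimpleGraph V) : Set V := {v : V | (G.neighborSet v).Infinite}

/-- The set of vertices of infinite degree having only finitely many neighbours of infinite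
degree. -/
def Vstar {V : Type*} (G : SimpleGraph V) : Set V :=
  {v : V | (G.neighborSet v).Infinite ∧ (G.neighborSet v ∩ Vinf G).Finite}

namespace WU

open Classical in
noncomputable def nb {V : Type*} (G : SimpleGraph V) (x : V) : Finset V :=
  if h : (G.neighborSet x).Finite then h.toFinset else ∅

def sg (b : Bool) : ℤ := if b then 1 else -1

open Classical in
noncomputable def flip {V : Type*} (π : V → Bool) (X : Finset V) : V → Bool :=
  fun v => if v ∈ X then !(π v) else π v

open Classical in
noncomputable def gain {V : Type*} (G : SimpleGraph V) (π : V → Bool) (X : Finset V) : ℤ :=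
  ∑ x ∈ X, ∑ y ∈ nb G x, if y ∈ X then 0 else sg (π x) * sg (π y)

open Classical in
noncomputable def ham {V : Type*} (G : SimpleGraph V) (π : V → Bool) (Z : Finset V) : ℤ :=
  ∑ x ∈ Z, ∑ y ∈ Z, if G.Adj x y then sg (π x) * sg (π y) else 0

lemma sg_not (b : Bool) : sg (!b) = - sg b := by cases b <;> rfl

lemma sg_flip_mem {V : Type*} (π : V → Bool) (X : Finset V) {v : V} (h : v ∈ X) :
    sg (flip π X v) = - sg (π v) := by simp [flip, h, sg_not]

lemma sg_flip_not_mem {V : Type*} (π : V → Bool) (X : Finset V) {v : V} (h : v ∉ X) :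
    sg (flip π X v) = sg (π v) := by simp [flip, h]

lemma mem_nb {V : Type*} {G : SimpleGraph V} {x : V} (h : x ∉ Vinf G) {y : V} :
    y ∈ nb G x ↔ G.Adj x y := by
  have h' : (G.neighborSet x).Finite := by simpa [Vinf] using h
  simp [nb, h']

open Classical in
lemma ham_gain {V : Type*} (G : SimpleGraph V) (π : V → Bool) (X Z : Finset V)
    (hX : ∀ x ∈ X, x ∉ Vinf G) (hXZ : X ⊆ Z) (hN : ∀ x ∈ X, nb G x ⊆ Z) :
    ham G π Z - ham G (flip π X) Z = 4 * gain G π X := by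
  let t : V → V → ℤ := fun x y =>
    if x ∈ X ∧ y ∉ X ∧ G.Adj x y then sg (π x) * sg (π y) else 0
  have h1 : gain G π X = ∑ x ∈ Z, ∑ y ∈ Z, t x y := by
    rw [← Finset.sum_subset hXZ (f := fun x => ∑ y ∈ Z, t x y)]
    · refine Finset.sum_congr rfl fun x hx => ?_
      rw [← Finset.sum_subset (hN x hx)]
      · refine Finset.sum_congr rfl fun y hy => ?_
        rw [mem_nb (hX x hx)] at hy
        by_cases h : y ∈ X <;> simp [t, h, hx, hy]
      · intro y _ hy
        rw [mem_nb (hX x hx)] at hy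
        simp [t, hy]
    · intro x _ hx
      simp [t, hx]
  have h2 : ∑ x ∈ Z, ∑ y ∈ Z, t x y = ∑ x ∈ Z, ∑ y ∈ Z, t y x := Finset.sum_comm
  have h3 : ham G π Z - ham G (flip π X) Z
      = 2 * ∑ x ∈ Z, ∑ y ∈ Z, t x y + 2 * ∑ x ∈ Z, ∑ y ∈ Z, t y x := by
    simp only [ham, Finset.mul_sum, ← Finset.sum_sub_distrib, ← Finset.sum_add_distrib]
    refine Finset.sum_congr rfl fun x _ => Finset.sum_congr rfl fun y _ => ?_
    by_cases hx : x ∈ X <;> by_cases hy : y ∈ X <;> by_cases ha : G.Adj x y <;>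
      simp [t, hx, hy, ha, G.adj_comm y x, sg_flip_mem, sg_flip_not_mem] <;> ring
  rw [h3, ← h2, h1]; ring

open Classical in
lemma flip_flip {V : Type*} (π : V → Bool) (X Y : Finset V) :
    flip (flip π X) Y = flip π (symmDiff X Y) := by
  funext v
  by_cases hx : v ∈ X <;> by_cases hy : v ∈ Y <;> simp [flip, hx, hy, Finset.mem_symmDiff]

open Classical in
lemma cocycle {V : Type*} (G : SimpleGraph V) (π : V → Bool) (X Y : Finset V)
    (hX : ∀ x ∈ X, x ∉ Vinf G) (hY : ∀ x ∈ Y, x ∉ Vinf G) :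
    gain G π (symmDiff X Y) = gain G π X + gain G (flip π X) Y := by
  let Z := (X ∪ Y) ∪ (X ∪ Y).biUnion (nb G)
  have hs : symmDiff X Y ⊆ X ∪ Y := by
    intro v; simp only [Finset.mem_symmDiff, Finset.mem_union]; tauto
  have hz : ∀ W : Finset V, W ⊆ X ∪ Y → ∀ ρ : V → Bool,
      ham G ρ Z - ham G (flip ρ W) Z = 4 * gain G ρ W := by
    intro W hW ρ
    refine ham_gain G ρ W Z ?_ (hW.trans Finset.subset_union_left) ?_
    · intro x hx
      rcases Finset.mem_union.1 (hW hx) with h | h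
      · exact hX x h
      · exact hY x h
    · intro x hx
      exact (Finset.subset_biUnion_of_mem (nb G) (hW hx)).trans Finset.subset_union_right
  have a := hz _ hs π
  have b := hz X Finset.subset_union_left π
  have c := hz Y Finset.subset_union_right (flip π X)
  rw [flip_flip] at c
  linarith

lemma gain_continuous {V : Type*} (G : SimpleGraph V) (X : Finset V) :
    Continuous (fun π : V → Bool => gain G π X) := by
  classical
  unfold gain
  refine continuous_finsetSum _ fun x _ => continuous_finsetSum _ fun y _ => ?_
  have hs : Continuous sg := continuous_of_discreteTopology
  split_ifs
  · exact continuous_const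
  · exact (hs.comp (continuous_apply x)).mul (hs.comp (continuous_apply y))

lemma ground {V : Type*} (G : SimpleGraph V) (base : V → Bool) :
    ∃ π : V → Bool, (∀ v ∈ Vinf G, π v = base v) ∧
      ∀ X : Finset V, (∀ x ∈ X, x ∉ Vinf G) → gain G π X ≤ 0 := by
  classical
  let C : Finset V → Set (V → Bool) := fun Y =>
    {π | (∀ v ∈ Vinf G, π v = base v) ∧
      ∀ X : Finset V, X ⊆ Y → (∀ x ∈ X, x ∉ Vinf G) → gain G π X ≤ 0}
  have hcl : ∀ Y, IsClosed (C Y) := by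
    intro Y
    simp only [C, Set.setOf_and, Set.setOf_forall]
    refine IsClosed.inter ?_ ?_
    · refine isClosed_iInter fun v => isClosed_iInter fun _ => ?_
      exact isClosed_eq (continuous_apply v) continuous_const
    · refine isClosed_iInter fun X => isClosed_iInter fun _ => isClosed_iInter fun _ => ?_
      exact isClosed_le (gain_continuous G X) continuous_const
  have hne : ∀ Y, (C Y).Nonempty := by
    intro Y
    let Y' := Y.filter (fun v => v ∉ Vinf G)
    obtain ⟨X, hX, hmax⟩ := Finset.exists_max_image Y'.powerset (gain G base)
      ⟨∅, by simp⟩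
    rw [Finset.mem_powerset] at hX
    have hXF : ∀ x ∈ X, x ∉ Vinf G := fun x hx => (Finset.mem_filter.1 (hX hx)).2
    refine ⟨flip base X, ?_, ?_⟩
    · intro v hv
      have : v ∉ X := fun h => hXF v h hv
      simp [flip, this]
    · intro W hW hWF
      have h := hmax (symmDiff X W) (by
        rw [Finset.mem_powerset]
        intro v hv
        rcases Finset.mem_symmDiff.1 hv with h | h
        · exact hX h.1
        · exact Finset.mem_filter.2 ⟨hW h.1, hWF v h.1⟩)
      rw [cocycle G base X W hXF hWF] at h
      linarith
  have hdir : Directed (· ⊇ ·) C := by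
    intro A B
    exact ⟨A ∪ B, fun π h => ⟨h.1, fun X hX => h.2 X (hX.trans Finset.subset_union_left)⟩,
      fun π h => ⟨h.1, fun X hX => h.2 X (hX.trans Finset.subset_union_right)⟩⟩
  obtain ⟨π, hπ⟩ := IsCompact.nonempty_iInter_of_directed_nonempty_isCompact_isClosed C hdir hne
    (fun Y => (hcl Y).isCompact) hcl
  rw [Set.mem_iInter] at hπ
  exact ⟨π, (hπ ∅).1, fun X hX => (hπ X).2 X subset_rfl hX⟩

lemma base_exists {V : Type*} [Countable V] (G : SimpleGraph V) :
    ∃ c : V → Bool, ∀ w, (G.neighborSet w ∩ Vinf G).Infinite →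
      {y | G.Adj w y ∧ y ∈ Vinf G ∧ c y ≠ c w}.Infinite := by
  classical
  let I := {w : V // (G.neighborSet w ∩ Vinf G).Infinite} × Finset V
  let U : I → Set (V → Bool) := fun i =>
    {c | ∃ y, y ∉ i.2 ∧ G.Adj i.1.1 y ∧ y ∈ Vinf G ∧ c y ≠ c i.1.1}
  have ho : ∀ i, IsOpen (U i) := by
    intro i
    have : U i = ⋃ y, ⋃ (_ : y ∉ i.2 ∧ G.Adj i.1.1 y ∧ y ∈ Vinf G),
        {c : V → Bool | c y ≠ c i.1.1} := by
      ext c; simp [U, and_assoc]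
    rw [this]
    refine isOpen_iUnion fun y => isOpen_iUnion fun _ => ?_
    exact isOpen_ne_fun (continuous_apply y) (continuous_apply _)
  have hd : ∀ i, Dense (U i) := by
    intro i c
    rw [mem_closure_iff]
    intro O hO hc
    obtain ⟨J, u, hu, hJ⟩ := isOpen_pi_iff.1 hO c hc
    obtain ⟨y, hy, hyn⟩ := i.1.2.exists_notMem_finset (i.2 ∪ J)
    rw [Finset.mem_union, not_or] at hyn
    have hne : i.1.1 ≠ y := G.ne_of_adj hy.1
    refine ⟨Function.update c y (!(c i.1.1)), hJ ?_, y, hyn.1, hy.1, hy.2, ?_⟩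
    · intro a ha
      have : a ≠ y := fun h => hyn.2 (h ▸ ha)
      rw [Function.update_of_ne this]
      exact (hu a ha).2
    · simp [Function.update_of_ne hne]
  obtain ⟨c, hc⟩ := (dense_iInter_of_isOpen ho hd).nonempty
  rw [Set.mem_iInter] at hc
  refine ⟨c, fun w hw hfin => ?_⟩
  obtain ⟨y, hy, h⟩ := hc (⟨w, hw⟩, hfin.toFinset)
  exact hy (hfin.mem_toFinset.2 h)

lemma happy_inf {V : Type*} [Countable V] (G : SimpleGraph V) (π : V → Bool) (x : V)
    (h : {y | G.Adj x y ∧ π y ≠ π x}.Infinite) : Happy G π x := by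
  unfold Happy
  have := h.to_subtype
  exact (Cardinal.mk_le_aleph0).trans (Cardinal.aleph0_le_mk _)

lemma happy_fin {V : Type*} (G : SimpleGraph V) (π : V → Bool) (x : V)
    (hx : x ∉ Vinf G) (h : gain G π {x} ≤ 0) : Happy G π x := by
  classical
  have e1 : {y | G.Adj x y ∧ π y = π x} = ((nb G x).filter (fun y => π y = π x) : Finset V) := by
    ext y; simp [mem_nb hx]
  have e2 : {y | G.Adj x y ∧ π y ≠ π x} = ((nb G x).filter (fun y => ¬ π y = π x) : Finset V) := by
    ext y; simp [mem_nb hx]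
  unfold Happy
  rw [e1, e2]
  simp only [Finset.coe_sort_coe, Cardinal.mk_coe_finset, Nat.cast_le]
  have : gain G π {x} = ∑ y ∈ nb G x,
      ((if π y = π x then (1:ℤ) else 0) - (if ¬ π y = π x then (1:ℤ) else 0)) := by
    simp only [gain, Finset.sum_singleton]
    refine Finset.sum_congr rfl fun y hy => ?_
    have : y ≠ x := (G.ne_of_adj ((mem_nb hx).1 hy)).symm
    simp only [Finset.mem_singleton, this, if_false]
    cases π x <;> cases π y <;> simp [sg]
  rw [this, Finset.sum_sub_distrib, Finset.sum_boole, Finset.sum_boole] at h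
  have h' := sub_nonpos.1 h
  exact_mod_cast h'

lemma gain_bound {V : Type*} (G : SimpleGraph V) (π : V → Bool) (B : Finset V)
    (hB : ∀ b ∈ B, {y | G.Adj b y ∧ π y ≠ π b}.Finite) (hBF : ∀ b ∈ B, b ∈ Vinf G) :
    ∃ M : ℤ, ∀ X : Finset V, (∀ x ∈ X, x ∉ Vinf G) →
      gain G (flip π B) X ≤ gain G π X + M := by
  classical
  have hP : {p : V × V | p.2 ∈ B ∧ G.Adj p.2 p.1 ∧ π p.1 ≠ π p.2}.Finite := by
    have : (⋃ b ∈ B, (fun y => (y, b)) '' {y | G.Adj b y ∧ π y ≠ π b}).Finite :=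
      Set.Finite.biUnion B.finite_toSet fun b hb => (hB b hb).image _
    refine this.subset ?_
    rintro ⟨x, b⟩ ⟨h1, h2⟩
    simp only [Set.mem_iUnion]
    exact ⟨b, h1, x, h2, rfl⟩
  refine ⟨2 * (hP.toFinset.card : ℤ), fun X hX => ?_⟩
  have key : gain G (flip π B) X ≤ gain G π X +
      ∑ x ∈ X, ∑ y ∈ nb G x, 2 * (if (x, y) ∈ hP.toFinset then (1:ℤ) else 0) := by
    simp only [gain, ← Finset.sum_add_distrib]
    refine Finset.sum_le_sum fun x hx => Finset.sum_le_sum fun y hy => ?_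
    have hxB : x ∉ B := fun h => hX x hx (hBF x h)
    have ha : G.Adj y x := ((mem_nb (hX x hx)).1 hy).symm
    rw [sg_flip_not_mem π B hxB]
    by_cases hyX : y ∈ X
    · simp only [hyX, if_true]; split_ifs <;> norm_num
    · by_cases hyB : y ∈ B
      · rw [sg_flip_mem π B hyB]
        simp only [hyX, if_false, Set.Finite.mem_toFinset, Set.mem_setOf_eq, hyB, ha, true_and]
        cases π x <;> cases π y <;> simp [sg]
      · rw [sg_flip_not_mem π B hyB]
        simp only [hyX, if_false]; split_ifs <;> linarith
  refine key.trans ?_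
  have : ∑ x ∈ X, ∑ y ∈ nb G x, (if (x, y) ∈ hP.toFinset then (1:ℤ) else 0)
      ≤ hP.toFinset.card := by
    have e : ∑ x ∈ X, ∑ y ∈ nb G x, (if (x, y) ∈ hP.toFinset then (1:ℤ) else 0)
        ≤ ∑ x ∈ X, ∑ y ∈ X.biUnion (nb G), (if (x, y) ∈ hP.toFinset then (1:ℤ) else 0) := by
      refine Finset.sum_le_sum fun x hx => ?_
      refine Finset.sum_le_sum_of_subset_of_nonneg (Finset.subset_biUnion_of_mem _ hx) ?_
      intros; split_ifs <;> norm_num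
    refine e.trans ?_
    rw [← Finset.sum_product', Finset.sum_boole]
    norm_cast
    refine Finset.card_le_card fun p hp => ?_
    exact (Finset.mem_filter.1 hp).2
  simp only [← Finset.mul_sum]
  linarith

end WU

/-- Every countable graph in which only finitely many vertices of infinite degree have finitely
many neighbours of infinite degree admits an unfriendly partition. -/
theorem Wclass_unfriendly {V : Type*} [Countable V] (G : SimpleGraph V)
    (hW : (Vstar G).Finite) : ∃ π : V → Bool, Unfriendly G π := by
  classical
  obtain ⟨c, hc⟩ := WU.base_exists G
  obtain ⟨π, hπc, hπ⟩ := WU.ground G c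
  let B : Finset V := hW.toFinset.filter (fun b => {y | G.Adj b y ∧ π y ≠ π b}.Finite)
  have hBF : ∀ b ∈ B, b ∈ Vinf G := by
    intro b hb
    have := (Finset.mem_filter.1 hb).1
    exact (hW.mem_toFinset.1 this).1
  obtain ⟨M, hM⟩ := WU.gain_bound G π B (fun b hb => (Finset.mem_filter.1 hb).2) hBF
  obtain ⟨m, ⟨X, hXF, rfl⟩, hmax⟩ := Int.exists_greatest_of_bdd
    (P := fun m => ∃ X : Finset V, (∀ x ∈ X, x ∉ Vinf G) ∧ WU.gain G (WU.flip π B) X = m)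
    ⟨M, by rintro z ⟨X, hX, rfl⟩; linarith [hM X hX, hπ X hX]⟩
    ⟨_, ∅, by simp, rfl⟩
  refine ⟨WU.flip (WU.flip π B) X, fun x => ?_⟩
  by_cases hx : x ∈ Vinf G
  · apply WU.happy_inf
    have hxX : x ∉ X := fun h => hXF x h hx
    by_cases hxB : x ∈ B
    · have hinf : {y | G.Adj x y ∧ π y = π x}.Infinite := by
        intro hfin
        refine hx ((hfin.union (Finset.mem_filter.1 hxB).2).subset fun y hy => ?_)
        by_cases h : π y = π x
        · exact Or.inl ⟨hy, h⟩
        · exact Or.inr ⟨hy, h⟩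
      refine (hinf.diff (B ∪ X).finite_toSet).mono ?_
      rintro y ⟨⟨h1, h2⟩, h3⟩
      simp only [Finset.coe_union, Set.mem_union, Finset.mem_coe, not_or] at h3
      exact ⟨h1, by simp [WU.flip, hxX, hxB, h3.1, h3.2, h2]⟩
    · have hinf : {y | G.Adj x y ∧ π y ≠ π x}.Infinite := by
        by_cases hs : x ∈ Vstar G
        · intro hfin
          exact hxB (Finset.mem_filter.2 ⟨hW.mem_toFinset.2 hs, hfin⟩)
        · have : (G.neighborSet x ∩ Vinf G).Infinite := fun hfin => hs ⟨hx, hfin⟩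
          refine (hc x this).mono ?_
          rintro y ⟨h1, h2, h3⟩
          exact ⟨h1, by rw [hπc y h2, hπc x hx]; exact h3⟩
      refine (hinf.diff (B ∪ X).finite_toSet).mono ?_
      rintro y ⟨⟨h1, h2⟩, h3⟩
      simp only [Finset.coe_union, Set.mem_union, Finset.mem_coe, not_or] at h3
      exact ⟨h1, by simpa [WU.flip, hxX, hxB, h3.1, h3.2] using h2⟩
  · apply WU.happy_fin G _ x hx
    have h1 : ∀ y ∈ ({x} : Finset V), y ∉ Vinf G := by simpa using hx
    have h := hmax _ ⟨symmDiff X {x}, by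
      intro y hy
      rcases Finset.mem_symmDiff.1 hy with h | h
      · exact hXF y h.1
      · exact h1 y h.1, rfl⟩
    rw [WU.cocycle G _ X {x} hXF h1] at h
    linarith
end

section
/- Every graph containing no brush admits an unfriendly partition, where a brush is a comb all of whose teeth are vertices of infinite degree (equivalently: a ray linked disjointly to infinitely many vertices of infinite degree). -/
open Cardinal

/-- `G` contains a comb with all teeth in `A`: a ray `r` together with infinitely many pairwise
disjoint finite paths, the `n`-th path going from the vertex `r (k n)` of the ray to a tooth
`t n ∈ A`, each path meeting the ray exactly in its first vertex. -/
def HasCombWithTeethIn {V : Type*} (G : SimpleGraph V) (A : Set V) : Prop :=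
  ∃ (r : ℕ → V) (k : ℕ → ℕ) (t : ℕ → V) (p : ∀ n : ℕ, G.Walk (r (k n)) (t n)),
    Function.Injective r ∧ (∀ n : ℕ, G.Adj (r n) (r (n + 1))) ∧
    StrictMono k ∧ (∀ n : ℕ, t n ∈ A) ∧ (∀ n : ℕ, (p n).IsPath) ∧
    (∀ m n : ℕ, m ≠ n → ∀ v : V, v ∈ (p m).support → v ∉ (p n).support) ∧
    (∀ n : ℕ, ∀ v ∈ (p n).support, (∃ i : ℕ, v = r i) → v = r (k n))

namespace NB

section
open scoped Classical
universe u
variable {V : Type u} (G : SimpleGraph V)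

noncomputable def nb (v : V) : Finset V :=
  if h : (G.neighborSet v).Finite then h.toFinset else ∅

def sg (π : V → Bool) (v : V) : ℤ := if π v then 1 else -1

noncomputable def gain (π : V → Bool) (F : Finset V) : ℤ :=
  ∑ a ∈ F, ∑ b ∈ nb G a, if b ∈ F then 0 else sg π a * sg π b

noncomputable def flp (F : Finset V) (π : V → Bool) (v : V) : Bool :=
  if v ∈ F then !(π v) else π v

variable {G}

lemma mem_nb {v u : V} (hv : v ∉ Vinf G) : u ∈ nb G v ↔ G.Adj v u := by
  have h : (G.neighborSet v).Finite := by
    simpa [Vinf] using hv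
  simp [nb, h]

lemma sg_abs (π : V → Bool) (a b : V) : sg π a * sg π b ≤ 1 := by
  unfold sg; split_ifs <;> simp

lemma gain_congr {π π' : V → Bool} {F : Finset V} (hF : ∀ a ∈ F, a ∉ Vinf G)
    (h1 : ∀ a ∈ F, π a = π' a) (h2 : ∀ a ∈ F, ∀ b, G.Adj a b → π b = π' b) :
    gain G π F = gain G π' F := by
  unfold gain
  refine Finset.sum_congr rfl fun a ha => Finset.sum_congr rfl fun b hb => ?_
  rw [mem_nb (hF a ha)] at hb
  simp [sg, h1 a ha, h2 a ha b hb]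

lemma gain_energy (π : V → Bool) (F M : Finset V) (hF : ∀ a ∈ F, a ∉ Vinf G)
    (hM : F ⊆ M) (hM' : ∀ a ∈ F, nb G a ⊆ M) :
    4 * gain G π F = (∑ a ∈ M, ∑ b ∈ M, if G.Adj a b then sg π a * sg π b else 0) -
      (∑ a ∈ M, ∑ b ∈ M, if G.Adj a b then sg (flp F π) a * sg (flp F π) b else 0) := by
  have hg : gain G π F = ∑ a ∈ M, ∑ b ∈ M,
      if (G.Adj a b ∧ a ∈ F ∧ b ∉ F) then sg π a * sg π b else 0 := by
    unfold gain
    rw [← Finset.sum_subset hM]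
    · refine Finset.sum_congr rfl fun a ha => ?_
      rw [← Finset.sum_subset (hM' a ha)]
      · refine Finset.sum_congr rfl fun b hb => ?_
        rw [mem_nb (hF a ha)] at hb
        by_cases hbF : b ∈ F <;> simp [hb, ha, hbF]
      · intro b _ hb
        rw [mem_nb (hF a ha)] at hb
        simp [hb]
    · intro a _ ha
      simp [ha]
  have hg' : gain G π F = ∑ a ∈ M, ∑ b ∈ M,
      if (G.Adj b a ∧ b ∈ F ∧ a ∉ F) then sg π b * sg π a else 0 := by
    rw [hg, Finset.sum_comm]
  have : 4 * gain G π F = 2 * gain G π F + 2 * gain G π F := by ring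
  rw [this]
  nth_rewrite 1 [hg]
  rw [hg', ← Finset.sum_sub_distrib, Finset.mul_sum, Finset.mul_sum, ← Finset.sum_add_distrib]
  refine Finset.sum_congr rfl fun a _ => ?_
  rw [← Finset.sum_sub_distrib, Finset.mul_sum, Finset.mul_sum, ← Finset.sum_add_distrib]
  refine Finset.sum_congr rfl fun b _ => ?_
  have hs : G.Adj b a ↔ G.Adj a b := G.adj_comm b a
  by_cases h : G.Adj a b
  · by_cases ha : a ∈ F <;> by_cases hb : b ∈ F <;> cases h1 : π a <;> cases h2 : π b <;>
      simp [h, hs, ha, hb, sg, flp, h1, h2]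
  · simp [h, hs]

lemma gain_cocycle (π : V → Bool) (F F' : Finset V) (hF : ∀ a ∈ F, a ∉ Vinf G)
    (hF' : ∀ a ∈ F', a ∉ Vinf G) :
    gain G π (symmDiff F F') = gain G π F + gain G (flp F π) F' := by
  set M := (F ∪ F') ∪ (F ∪ F').biUnion (nb G) with hM
  have sub1 : F ⊆ M := by intro x hx; simp [hM, hx]
  have sub2 : F' ⊆ M := by intro x hx; simp [hM, hx]
  have nb1 : ∀ a ∈ F, nb G a ⊆ M := by
    intro a ha x hx
    simp only [hM, Finset.mem_union, Finset.mem_biUnion]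
    exact Or.inr ⟨a, Or.inl ha, hx⟩
  have nb2 : ∀ a ∈ F', nb G a ⊆ M := by
    intro a ha x hx
    simp only [hM, Finset.mem_union, Finset.mem_biUnion]
    exact Or.inr ⟨a, Or.inr ha, hx⟩
  have hsd : ∀ a ∈ symmDiff F F', a ∈ F ∨ a ∈ F' := by
    intro a ha
    rw [Finset.mem_symmDiff] at ha
    tauto
  have e1 := gain_energy π F M hF sub1 nb1
  have e2 := gain_energy (flp F π) F' M hF' sub2 nb2
  have e3 := gain_energy π (symmDiff F F') M
    (fun a ha => (hsd a ha).elim (hF a) (hF' a))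
    (fun a ha => (hsd a ha).elim (fun h => sub1 h) (fun h => sub2 h))
    (fun a ha => (hsd a ha).elim (nb1 a) (nb2 a))
  have : flp F' (flp F π) = flp (symmDiff F F') π := by
    funext v
    by_cases h1 : v ∈ F <;> by_cases h2 : v ∈ F' <;> simp [flp, Finset.mem_symmDiff, h1, h2]
  rw [this] at e2
  linarith

lemma gain_le (π : V → Bool) (F : Finset V) : gain G π F ≤ ∑ a ∈ F, ((nb G a).card : ℤ) := by
  unfold gain
  refine Finset.sum_le_sum fun a _ => ?_
  calc _ ≤ ∑ b ∈ nb G a, (1 : ℤ) := by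
        refine Finset.sum_le_sum fun b _ => ?_
        split_ifs
        · simp
        · exact sg_abs π a b
    _ = _ := by simp

lemma gain_split {ι : Type*} (ℓ : V → ι) (π : V → Bool) (F : Finset V) (hF : ∀ a ∈ F, a ∉ Vinf G)
    (hl : ∀ a ∈ F, ∀ b ∈ F, G.Adj a b → ℓ a = ℓ b)
    (h : ∀ i, ∀ F' : Finset V, (∀ x, x ∈ F' ↔ x ∈ F ∧ ℓ x = i) → gain G π F' ≤ 0) : gain G π F ≤ 0 := by
  have : gain G π F = ∑ i ∈ F.image ℓ, gain G π (F.filter (fun a => ℓ a = i)) := by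
    unfold gain
    rw [← Finset.sum_fiberwise_of_maps_to (g := ℓ) (t := F.image ℓ)
      (fun a ha => Finset.mem_image_of_mem _ ha)]
    refine Finset.sum_congr rfl fun i _ => Finset.sum_congr rfl fun a ha =>
      Finset.sum_congr rfl fun b hb => ?_
    rw [Finset.mem_filter] at ha
    rw [mem_nb (hF a ha.1)] at hb
    by_cases hbF : b ∈ F
    · have := hl a ha.1 b hbF hb
      simp [hbF, ← this, ha.2]
    · simp [hbF]
  rw [this]
  exact Finset.sum_nonpos fun i _ => h i _ fun x => Finset.mem_filter

lemma gain_flip_one (π : V → Bool) (a : V) (F : Finset V) (hF : ∀ v ∈ F, v ∉ Vinf G)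
    (ha : a ∉ F) :
    gain G (flp {a} π) F ≤ gain G π F +
      ∑ v ∈ F, (if G.Adj a v ∧ π v ≠ π a then (2 : ℤ) else 0) := by
  unfold gain
  rw [← Finset.sum_add_distrib]
  refine Finset.sum_le_sum fun v hv => ?_
  have hva : v ≠ a := fun h => ha (h ▸ hv)
  have : (if G.Adj a v ∧ π v ≠ π a then (2 : ℤ) else 0) = 
     ∑ b ∈ nb G v, (if b = a then (if π v ≠ π a then (2 : ℤ) else 0) else 0) := by
    rw [Finset.sum_ite_eq']
    simp only [mem_nb (hF v hv), G.adj_comm v a]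
    by_cases h : G.Adj a v <;> simp [h]
  rw [this, ← Finset.sum_add_distrib]
  refine Finset.sum_le_sum fun b hb => ?_
  by_cases hba : b = a
  · subst hba
    cases h1 : π v <;> cases h2 : π b <;> simp [ha, sg, flp, hva, h1, h2]
  · simp [sg, flp, hva, hba]

/-- goodness -/
def Opt (G : SimpleGraph V) (S : Set V) (π : V → Bool) : Prop :=
  ∀ F : Finset V, (∀ a ∈ F, a ∈ S ∧ a ∉ Vinf G) → gain G π F ≤ 0

def Good (G : SimpleGraph V) (S : Set V) (π : V → Bool) : Prop :=
  (∀ v ∈ S, v ∈ Vinf G → Happy G π v) ∧ Opt G S π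

def T (G : SimpleGraph V) (S : Set V) : Prop :=
  ∀ c : V → Bool, ∃ π : V → Bool, (∀ v, v ∉ S → π v = c v) ∧ Good G S π

def TS (G : SimpleGraph V) (S : Set V) : Prop := ∀ S' ⊆ S, T G S'

lemma opt_happy {S : Set V} {π : V → Bool} (h : Opt G S π) {v : V} (hv : v ∈ S)
    (hf : v ∉ Vinf G) : Happy G π v := by
  have := h {v} (by simp [hv, hf])
  unfold Happy
  have e1 : {y : V | G.Adj v y ∧ π y = π v} = ↑((nb G v).filter (fun y => π y = π v)) := by
    ext y; simp [mem_nb hf]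
  have e2 : {y : V | G.Adj v y ∧ π y ≠ π v} = ↑((nb G v).filter (fun y => ¬ π y = π v)) := by
    ext y; simp [mem_nb hf]
  rw [e1, e2]
  erw [Cardinal.mk_coe_finset, Cardinal.mk_coe_finset]
  norm_cast
  have e3 : gain G π {v} = ((nb G v).filter (fun y => π y = π v)).card -
      ((nb G v).filter (fun y => ¬ π y = π v)).card := by
    unfold gain
    rw [Finset.sum_singleton, Finset.card_filter, Finset.card_filter]
    push_cast
    rw [← Finset.sum_sub_distrib]
    refine Finset.sum_congr rfl fun b hb => ?_
    rw [mem_nb hf] at hb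
    have := hb.ne'
    cases h1 : π v <;> cases h2 : π b <;> simp [this, sg, h1, h2]
  omega

lemma opt_of_max {S : Set V} {π : V → Bool} {F : Finset V} (hF : ∀ a ∈ F, a ∈ S ∧ a ∉ Vinf G)
    (hmax : ∀ F' : Finset V, (∀ a ∈ F', a ∈ S ∧ a ∉ Vinf G) → gain G π F' ≤ gain G π F) :
    Opt G S (flp F π) := by
  intro F' hF'
  have h1 := gain_cocycle π F F' (fun a ha => (hF a ha).2) (fun a ha => (hF' a ha).2)
  have h2 := hmax (symmDiff F F') (by
    intro a ha
    rw [Finset.mem_symmDiff] at ha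
    rcases ha with h | h
    · exact hF a h.1
    · exact hF' a h.1)
  linarith

lemma exists_opt {S : Set V} {π : V → Bool} (N : ℤ)
    (hN : ∀ F' : Finset V, (∀ a ∈ F', a ∈ S ∧ a ∉ Vinf G) → gain G π F' ≤ N) :
    ∃ F : Finset V, (∀ a ∈ F, a ∈ S ∧ a ∉ Vinf G) ∧ Opt G S (flp F π) := by
  obtain ⟨z, ⟨F, hF, hz⟩, hmax⟩ := Int.exists_greatest_of_bdd
    (P := fun z => ∃ F : Finset V, (∀ a ∈ F, a ∈ S ∧ a ∉ Vinf G) ∧ gain G π F = z)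
    ⟨N, by rintro z ⟨F, hF, rfl⟩; exact hN F hF⟩ ⟨_, ∅, by simp, rfl⟩
  exact ⟨F, hF, opt_of_max hF fun F' hF' => hz ▸ hmax _ ⟨F', hF', rfl⟩⟩

lemma base {S : Set V} (hS : ∀ v ∈ S, v ∉ Vinf G) : T G S := by
  intro c
  let ι := {F : Finset V // ∀ a ∈ F, a ∈ S}
  let K : ι → Set (V → Bool) := fun F =>
    {π | (∀ v, v ∉ S → π v = c v) ∧ gain G π F.1 ≤ 0}
  have hcont : ∀ v, Continuous (fun π : V → Bool => sg π v) := by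
    intro v
    exact (continuous_of_discreteTopology (f := fun b : Bool => (if b then (1:ℤ) else -1))).comp
      (continuous_apply v)
  have hcl : ∀ F, IsClosed (K F) := by
    intro F
    have hK : K F = {π | ∀ v, v ∉ S → π v = c v} ∩ {π | gain G π F.1 ≤ 0} := rfl
    rw [hK]
    refine IsClosed.inter ?_ ?_
    · simp only [Set.ofPred_forall]
      refine isClosed_iInter fun v => isClosed_iInter fun _ => ?_
      exact isClosed_eq (continuous_apply v) continuous_const
    · refine isClosed_le ?_ continuous_const
      unfold gain
      refine continuous_finsetSum _ fun a _ => continuous_finsetSum _ fun b _ => ?_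
      split_ifs
      · exact continuous_const
      · exact (hcont a).mul (hcont b)
  have hne : (⋂ i, K i).Nonempty := by
    by_contra hemp
    rw [Set.not_nonempty_iff_eq_empty] at hemp
    obtain ⟨t, ht⟩ := isCompact_univ.elim_finite_subfamily_closed K hcl (by rw [hemp]; simp)
    rw [Set.univ_inter] at ht
    let F0 : Finset V := t.biUnion (fun i => i.1)
    have hF0 : ∀ a ∈ F0, a ∈ S := by
      intro a ha
      simp only [F0, Finset.mem_biUnion] at ha
      obtain ⟨i, _, hi⟩ := ha
      exact i.2 a hi
    obtain ⟨F, hF, hopt⟩ := exists_opt (G := G) (S := (F0 : Set V)) (π := c)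
      (∑ a ∈ F0, ((nb G a).card : ℤ)) (by
        intro F' hF'
        refine (gain_le c F').trans (Finset.sum_le_sum_of_subset_of_nonneg ?_ ?_)
        · intro a ha; exact (hF' a ha).1
        · exact fun _ _ _ => Int.natCast_nonneg _)
    have : flp F c ∈ ⋂ i ∈ t, K i := by
      simp only [Set.mem_iInter]
      intro i hi
      refine ⟨fun v hv => ?_, hopt i.1 fun a ha => ⟨?_, hS a (i.2 a ha)⟩⟩
      · have : v ∉ F := fun h => hv (hF0 v (hF v h).1)
        simp [flp, this]
      · simp only [F0, Finset.coe_biUnion, Set.mem_iUnion]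
        exact ⟨i, hi, ha⟩
    rw [ht] at this
    exact this
  obtain ⟨π, hπ⟩ := hne
  simp only [Set.mem_iInter] at hπ
  refine ⟨π, (hπ ⟨∅, by simp⟩).1, fun v hv h => absurd h (hS v hv), fun F hF => ?_⟩
  exact (hπ ⟨F, fun a ha => (hF a ha).1⟩).2

lemma le_sdiff {X Z : Set V} {κ : Cardinal.{u}} (h0 : ℵ₀ ≤ κ) (hX : κ ≤ #X) (hZ : #Z < κ) :
    κ ≤ #(X \ Z : Set V) := by
  by_contra h
  push Not at h
  exact absurd (hX.trans (Cardinal.le_mk_sdiff_add_mk X Z))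
    (not_le.mpr (Cardinal.add_lt_of_lt h0 h hZ))

lemma vinf_iff {v : V} : v ∈ Vinf G ↔ ℵ₀ ≤ #(G.neighborSet v) := by
  rw [Cardinal.aleph0_le_mk_iff, Set.infinite_coe_iff]; rfl

lemma happy_of {π : V → Bool} {v : V}
    (h : #(G.neighborSet v) ≤ #{y : V | G.Adj v y ∧ π y ≠ π v}) : Happy G π v := by
  refine le_trans (Cardinal.mk_le_mk_of_subset ?_) h
  intro y hy
  exact hy.1

lemma nbr_le (π : V → Bool) (v : V) :
    #(G.neighborSet v) ≤ #{y : V | G.Adj v y ∧ π y = π v} + #{y : V | G.Adj v y ∧ π y ≠ π v} := by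
  refine le_trans (Cardinal.mk_le_mk_of_subset ?_) (Cardinal.mk_union_le _ _)
  intro y hy
  by_cases h : π y = π v
  · exact Or.inl ⟨hy, h⟩
  · exact Or.inr ⟨hy, h⟩

lemma le_of_happy {π : V → Bool} {v : V} (hv : v ∈ Vinf G) (h : Happy G π v) :
    #(G.neighborSet v) ≤ #{y : V | G.Adj v y ∧ π y ≠ π v} := by
  by_contra hlt
  push Not at hlt
  exact absurd (nbr_le π v)
    (not_le.mpr (Cardinal.add_lt_of_lt (vinf_iff.1 hv) (lt_of_le_of_lt h hlt) hlt))

lemma happy_stable {π π' : V → Bool} {v : V} (hv : v ∈ Vinf G) (h : Happy G π v)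
    (hvv : π' v = π v) (Z : Set V) (hZ : #Z < #(G.neighborSet v))
    (hZ' : ∀ y, y ∉ Z → G.Adj v y → π' y = π y) : Happy G π' v := by
  refine happy_of ((le_sdiff (vinf_iff.1 hv) (le_of_happy hv h) hZ).trans
    (Cardinal.mk_le_mk_of_subset ?_))
  rintro y ⟨⟨h1, h2⟩, h3⟩
  refine ⟨h1, ?_⟩
  rw [hZ' y h3 h1, hvv]
  exact h2

lemma fin_lt {v : V} (hv : v ∈ Vinf G) (F : Finset V) : #(F : Set V) < #(G.neighborSet v) :=
  lt_of_lt_of_le (Cardinal.lt_aleph0_iff_set_finite.2 F.finite_toSet) (vinf_iff.1 hv)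

lemma fix {S : Set V} {π : V → Bool} (hh : ∀ v ∈ S, v ∈ Vinf G → Happy G π v) (N : ℤ)
    (hN : ∀ F' : Finset V, (∀ a ∈ F', a ∈ S ∧ a ∉ Vinf G) → gain G π F' ≤ N) :
    ∃ π' : V → Bool, (∀ v, v ∉ S → π' v = π v) ∧ Good G S π' := by
  obtain ⟨F, hF, ho⟩ := exists_opt N hN
  refine ⟨flp F π, fun v hv => ?_, fun v hv hvi => ?_, ho⟩
  · have : v ∉ F := fun h => hv (hF v h).1
    simp [flp, this]
  · have : v ∉ F := fun h => (hF v h).2 hvi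
    refine happy_stable hvi (hh v hv hvi) (by simp [flp, this]) F (fin_lt hvi F) ?_
    intro y hy _
    have : y ∉ F := hy
    simp [flp, this]

lemma addFin {S : Set V} (hS : T G S) (Y : Finset V) (hY : ∀ y ∈ Y, y ∉ Vinf G) :
    T G (S ∪ Y) := by
  intro c
  obtain ⟨π, hc, hg⟩ := hS c
  obtain ⟨π', h1, h2⟩ := fix (G := G) (S := S ∪ Y) (π := π) (fun v hv hvi => by
    rcases hv with hv | hv
    · exact hg.1 v hv hvi
    · exact absurd hvi (hY v hv)) (∑ a ∈ Y, ((nb G a).card : ℤ)) (by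
    intro F hF
    have e : F = symmDiff (F.filter (· ∈ S)) (F.filter (· ∉ S)) := by
      ext x
      rw [Finset.mem_symmDiff, Finset.mem_filter, Finset.mem_filter]
      tauto
    rw [congrArg (gain G π) e, gain_cocycle _ _ _ (fun a ha => (hF a (Finset.mem_filter.1 ha).1).2)
      (fun a ha => (hF a (Finset.mem_filter.1 ha).1).2)]
    have g1 := hg.2 (F.filter (· ∈ S)) (fun a ha =>
      ⟨(Finset.mem_filter.1 ha).2, (hF a (Finset.mem_filter.1 ha).1).2⟩)
    have g2 := gain_le (G := G) (flp (F.filter (· ∈ S)) π) (F.filter (· ∉ S))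
    have g3 : ∑ a ∈ F.filter (· ∉ S), ((nb G a).card : ℤ) ≤ ∑ a ∈ Y, ((nb G a).card : ℤ) := by
      refine Finset.sum_le_sum_of_subset_of_nonneg ?_ ?_
      · intro a ha
        rw [Finset.mem_filter] at ha
        rcases (hF a ha.1).1 with h | h
        · exact absurd h ha.2
        · exact h
      · exact fun _ _ _ => Int.natCast_nonneg _
    linarith)
  refine ⟨π', fun v hv => ?_, h2⟩
  rw [h1 v hv, hc v (fun h => hv (Or.inl h))]

lemma TS_addFin {S : Set V} (hS : TS G S) (Y : Finset V) (hY : ∀ y ∈ Y, y ∉ Vinf G) :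
    TS G (S ∪ Y) := by
  intro S' hS'
  have : S' = (S' ∩ S) ∪ (Y.filter (· ∈ S') : Finset V) := by
    ext x
    have h3 : x ∈ S' → x ∈ S ∪ (Y : Set V) := fun h => hS' h
    simp only [Set.mem_union, Set.mem_inter_iff, Finset.mem_coe, Finset.mem_filter] at h3 ⊢
    tauto
  rw [this]
  exact addFin (hS _ Set.inter_subset_right) _ (fun y hy => hY y (Finset.mem_filter.1 hy).1)

/-- closure of `B ∩ D` inside `D` -/
def lev (G : SimpleGraph V) (B D : Set V) : ℕ → Set V
  | 0 => B ∩ D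
  | n + 1 => {v | v ∈ D ∧ ∃ u ∈ lev G B D n, G.Adj u v}

lemma lev_sub (B D : Set V) (n : ℕ) : lev G B D n ⊆ D := by
  cases n with
  | zero => exact Set.inter_subset_right
  | succ n => intro v hv; exact hv.1

lemma lev_card (B D : Set V) (μ : Cardinal.{u}) (h0 : ℵ₀ ≤ μ) (hB : #B ≤ μ)
    (hD : ∀ v ∈ D, #(G.neighborSet v) ≤ μ) : #(⋃ n, lev G B D n : Set V) ≤ μ := by
  have hn : ∀ n, #(lev G B D n) ≤ μ := by
    intro n
    induction n with
    | zero => exact (Cardinal.mk_le_mk_of_subset Set.inter_subset_left).trans hB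
    | succ n ih =>
      have hsub : lev G B D (n + 1) ⊆ ⋃ u ∈ lev G B D n, G.neighborSet u := by
        rintro v ⟨_, u, hu, huv⟩
        simp only [Set.mem_iUnion]
        exact ⟨u, hu, huv⟩
      refine (Cardinal.mk_le_mk_of_subset hsub).trans ((Cardinal.mk_biUnion_le _ _).trans ?_)
      refine (mul_le_mul' ih (ciSup_le' fun x => hD _ (lev_sub B D n x.2))).trans ?_
      rw [Cardinal.mul_eq_self h0]
  have h1 := Cardinal.mk_iUnion_le_lift (fun n => lev G B D n)
  simp only [Cardinal.lift_uzero, Cardinal.mk_nat, Cardinal.lift_aleph0] at h1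
  refine h1.trans ((mul_le_mul' h0 (ciSup_le' hn)).trans ?_)
  rw [Cardinal.mul_eq_self h0]

lemma addOne {S : Set V} (hS : TS G S) (s : Finset V) (hs : ∀ x ∈ s, x ∈ Vinf G) (a : V)
    (ha : a ∈ Vinf G) (haS : a ∉ S) (has : a ∉ s)
    (hmin : ∀ x ∈ s, #(G.neighborSet a) ≤ #(G.neighborSet x))
    (π : V → Bool) (hπ : Good G (S ∪ s) π) :
    ∃ π' : V → Bool, (∀ v, v ∉ S ∪ (insert a s : Finset V) → π' v = π v) ∧
      Good G (S ∪ (insert a s : Finset V)) π' := by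
  have hmem : ∀ v, v ∈ S ∪ ((insert a s : Finset V) : Set V) ↔ v ∈ S ∪ (s : Set V) ∨ v = a := by
    intro v; simp; tauto
  by_cases hhap : Happy G π a
  · refine ⟨π, fun _ _ => rfl, fun v hv hvi => ?_, fun F hF => hπ.2 F fun x hx => ?_⟩
    · rcases (hmem v).1 hv with h | rfl
      · exact hπ.1 v h hvi
      · exact hhap
    · rcases (hmem x).1 (hF x hx).1 with h | rfl
      · exact ⟨h, (hF x hx).2⟩
      · exact absurd ha (hF x hx).2
  set B : Set V := {y | G.Adj a y ∧ π y ≠ π a} with hB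
  set A : Set V := {y | G.Adj a y ∧ π y = π a} with hA
  have hlt : #B < #A := not_le.1 hhap
  have hκ := vinf_iff.1 ha
  have hAκ : #(G.neighborSet a) ≤ #A := by
    by_contra h
    push Not at h
    exact absurd (nbr_le π a) (not_le.mpr (Cardinal.add_lt_of_lt hκ h (hlt.trans h)))
  have hBκ : #B < #(G.neighborSet a) :=
    hlt.trans_le (Cardinal.mk_le_mk_of_subset fun y hy => hy.1)
  have hfS : ∀ F : Finset V, (∀ x ∈ F, x ∈ S ∪ ((insert a s : Finset V) : Set V) ∧ x ∉ Vinf G) →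
      ∀ x ∈ F, x ∈ S := by
    intro F hF x hx
    rcases (hmem x).1 (hF x hx).1 with h | rfl
    · rcases h with h | h
      · exact h
      · exact absurd (hs x h) (hF x hx).2
    · exact absurd ha (hF x hx).2
  set π1 := flp {a} π with hπ1
  have hπ1a : π1 a = !(π a) := by simp [hπ1, flp]
  have hπ1n : ∀ v, v ≠ a → π1 v = π v := by intro v hv; simp [hπ1, flp, hv]
  by_cases hBf : B.Finite
  · obtain ⟨π', h1, h2⟩ := fix (G := G) (S := S ∪ ((insert a s : Finset V) : Set V)) (π := π1) (by
      intro v hv hvi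
      by_cases hva : v = a
      · subst hva
        refine happy_of (hAκ.trans (Cardinal.mk_le_mk_of_subset ?_))
        rintro y ⟨h1, h2⟩
        refine ⟨h1, ?_⟩
        rw [hπ1n y h1.ne', hπ1a, h2]
        simp
      · have : v ∈ S ∪ (s : Set V) := ((hmem v).1 hv).resolve_right hva
        refine happy_stable hvi (hπ.1 v this hvi) (hπ1n v hva) ({a} : Finset V) (fin_lt hvi _) ?_
        intro y hy _
        exact hπ1n y (by simpa using hy)) (2 * hBf.toFinset.card) (by
      intro F hF
      have haF : a ∉ F := fun h => (hF a h).2 ha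
      have g1 := gain_flip_one π a F (fun x hx => (hF x hx).2) haF
      have g2 := hπ.2 F (fun x hx => ⟨Or.inl (hfS F hF x hx), (hF x hx).2⟩)
      have g3 : ∑ v ∈ F, (if G.Adj a v ∧ π v ≠ π a then (2 : ℤ) else 0) ≤
          2 * hBf.toFinset.card := by
        rw [← Finset.sum_filter, Finset.sum_const, nsmul_eq_mul, mul_comm]
        have : (F.filter (fun v => G.Adj a v ∧ π v ≠ π a)).card ≤ hBf.toFinset.card := by
          refine Finset.card_le_card fun x hx => ?_
          rw [Set.Finite.mem_toFinset]
          exact (Finset.mem_filter.1 hx).2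
        have : ((F.filter (fun v => G.Adj a v ∧ π v ≠ π a)).card : ℤ) ≤ hBf.toFinset.card := by
          exact_mod_cast this
        linarith
      linarith)
    refine ⟨π', fun v hv => ?_, h2⟩
    rw [h1 v hv, hπ1n]
    rintro rfl
    exact hv ((hmem v).2 (Or.inr rfl))
  · have hμ0 : ℵ₀ ≤ #B := by
      rw [Cardinal.aleph0_le_mk_iff, Set.infinite_coe_iff]; exact hBf
    set D : Set V := {v | v ∈ S ∧ #(G.neighborSet v) ≤ #B} with hD
    set W : Set V := ⋃ n, lev G B D n with hW
    have hWD : W ⊆ D := Set.iUnion_subset fun n => lev_sub B D n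
    have hBW : ∀ v, v ∈ B → v ∈ D → v ∈ W := fun v h1 h2 => Set.mem_iUnion.2 ⟨0, h1, h2⟩
    have hWcl : ∀ v ∈ D, ∀ w ∈ W, G.Adj w v → v ∈ W := by
      intro v hv w hw hadj
      obtain ⟨n, hn⟩ := Set.mem_iUnion.1 hw
      exact Set.mem_iUnion.2 ⟨n + 1, hv, w, hn, hadj⟩
    have hWc : #W ≤ #B := lev_card B D _ hμ0 le_rfl fun v hv => hv.2
    have hWS : W ⊆ S := fun v hv => (hWD hv).1
    have haW : a ∉ W := fun h => haS (hWS h)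
    have hfD : ∀ v ∈ S, v ∉ Vinf G → v ∈ D := by
      intro v hv hvf
      refine ⟨hv, le_trans ?_ hμ0⟩
      rw [vinf_iff] at hvf
      exact (not_le.1 hvf).le
    obtain ⟨π2, h1, h2⟩ := hS W hWS π1
    have h2a : π2 a = !(π a) := by rw [h1 a haW, hπ1a]
    have h2n : ∀ v, v ∉ W → v ≠ a → π2 v = π v := fun v h h' => by rw [h1 v h, hπ1n v h']
    refine ⟨π2, ?_, ?_, ?_⟩
    · intro v hv
      refine h2n v (fun h => hv (Or.inl (hWS h))) ?_
      rintro rfl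
      exact hv ((hmem v).2 (Or.inr rfl))
    · intro v hv hvi
      by_cases hva : v = a
      · subst hva
        refine happy_of ((le_sdiff hκ hAκ (hWc.trans_lt hBκ)).trans
          (Cardinal.mk_le_mk_of_subset ?_))
        rintro y ⟨⟨h3, h4⟩, h5⟩
        refine ⟨h3, ?_⟩
        rw [h2n y h5 h3.ne', h2a, h4]
        simp
      · have hv' : v ∈ S ∪ (s : Set V) := ((hmem v).1 hv).resolve_right hva
        by_cases hvW : v ∈ W
        · exact h2.1 v hvW hvi
        by_cases hvd : #(G.neighborSet v) ≤ #B
        · have hvS : v ∈ S := by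
            rcases hv' with h | h
            · exact h
            · exact absurd (hmin v h) (not_le.2 (hvd.trans_lt hBκ))
          refine happy_stable hvi (hπ.1 v hv' hvi) (h2n v hvW hva) ({a} : Finset V)
            (fin_lt hvi _) ?_
          intro y hy hadj
          refine h2n y (fun hyW => hvW (hWcl v ⟨hvS, hvd⟩ y hyW hadj.symm)) (by simpa using hy)
        · push Not at hvd
          refine happy_stable hvi (hπ.1 v hv' hvi) (h2n v hvW hva) (W ∪ {a}) ?_ ?_
          · refine (Cardinal.mk_union_le _ _).trans_lt
              (Cardinal.add_lt_of_lt (vinf_iff.1 hvi) (hWc.trans_lt hvd) ?_)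
            rw [Cardinal.mk_singleton]
            exact lt_of_lt_of_le Cardinal.one_lt_aleph0 (vinf_iff.1 hvi)
          · intro y hy _
            exact h2n y (fun h => hy (Or.inl h)) (fun h => hy (Or.inr h))
    · intro F hF
      have hFS := hfS F hF
      have hFD : ∀ x ∈ F, x ∈ D := fun x hx => hfD x (hFS x hx) (hF x hx).2
      refine gain_split (fun v => v ∈ W) π2 F (fun x hx => (hF x hx).2) ?_ ?_
      · intro x hx y hy hxy
        exact propext ⟨fun h => hWcl y (hFD y hy) x h hxy, fun h => hWcl x (hFD x hx) y h hxy.symm⟩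
      · intro p F' hF'
        by_cases hp : p
        · refine h2.2 _ fun x hx => ?_
          rw [hF'] at hx
          refine ⟨?_, (hF x hx.1).2⟩
          simpa [hp] using hx.2
        · have hF'W : ∀ x ∈ F', x ∉ W := by
            intro x hx
            rw [hF'] at hx
            simpa [hp] using hx.2
          have hF'F : ∀ x ∈ F', x ∈ F := fun x hx => ((hF' x).1 hx).1
          have hF'i : ∀ x ∈ F', x ∉ Vinf G := fun x hx => (hF x (hF'F x hx)).2
          have g0 : gain G π2 F' = gain G π1 F' := by
            refine gain_congr hF'i (fun x hx => h1 x (hF'W x hx)) ?_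
            intro x hx y hxy
            exact h1 y fun hyW => hF'W x hx (hWcl x (hFD x (hF'F x hx)) y hyW hxy.symm)
          have g1 := gain_flip_one π a F' hF'i (fun h => hF'i a h ha)
          have g2 := hπ.2 F' (fun x hx => ⟨Or.inl (hFS x (hF'F x hx)), hF'i x hx⟩)
          have g3 : ∑ v ∈ F', (if G.Adj a v ∧ π v ≠ π a then (2 : ℤ) else 0) = 0 := by
            refine Finset.sum_eq_zero fun x hx => ?_
            rw [if_neg]
            intro hxB
            exact hF'W x hx (hBW x hxB (hFD x (hF'F x hx)))
          rw [g0]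
          linarith

lemma addInf {S : Set V} (hS : TS G S) (Y : Finset V) (hY : ∀ y ∈ Y, y ∈ Vinf G)
    (hYS : ∀ y ∈ Y, y ∉ S) : T G (S ∪ Y) := by
  intro c
  have key : (∀ y ∈ Y, y ∈ Vinf G ∧ y ∉ S) → ∃ π : V → Bool,
      (∀ v, v ∉ S ∪ (Y : Set V) → π v = c v) ∧ Good G (S ∪ Y) π := by
    refine Finset.induction_on_min_value (fun v => #(G.neighborSet v)) Y ?_ ?_
    · intro _
      simpa using hS S le_rfl c
    · intro a s has hmin ih h
      obtain ⟨π, h1, h2⟩ := ih fun y hy => h y (Finset.mem_insert_of_mem hy)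
      obtain ⟨π', h3, h4⟩ := addOne hS s (fun x hx => (h x (Finset.mem_insert_of_mem hx)).1) a
        (h a (Finset.mem_insert_self a s)).1 (h a (Finset.mem_insert_self a s)).2 has hmin π h2
      refine ⟨π', fun v hv => ?_, h4⟩
      rw [h3 v hv, h1 v]
      intro hv'
      apply hv
      rcases hv' with h | h
      · exact Or.inl h
      · exact Or.inr (Finset.mem_insert_of_mem h)
  exact key fun y hy => ⟨hY y hy, hYS y hy⟩

lemma TS_of_sdiff {S : Set V} (Y : Finset V) (hS : TS G (S \ Y)) : TS G S := by
  have h1 := TS_addFin hS (Y.filter (· ∉ Vinf G)) (fun y hy => (Finset.mem_filter.1 hy).2)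
  intro S' hS'
  have e : S' = (S' \ (Y.filter (· ∈ Vinf G) : Finset V)) ∪
      (Y.filter (fun y => y ∈ Vinf G ∧ y ∈ S') : Finset V) := by
    ext x
    simp
    tauto
  rw [e]
  refine addInf ?_ _ ?_ ?_
  · intro R hR
    refine h1 R fun x hx => ?_
    have := hR hx
    have h3 := @hS' x
    simp at this ⊢
    tauto
  · intro y hy
    exact (Finset.mem_filter.1 hy).2.1
  · intro y hy
    simp at hy ⊢
    tauto

/-- components -/
def comp (G : SimpleGraph V) (S : Set V) (a : V) : Set V :=
  {b | ∃ w : G.Walk a b, ∀ v ∈ w.support, v ∈ S}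

lemma comp_sub {S : Set V} {a : V} : comp G S a ⊆ S := by
  rintro b ⟨w, hw⟩
  exact hw b w.end_mem_support

lemma comp_self {S : Set V} {a : V} (h : a ∈ S) : a ∈ comp G S a :=
  ⟨.nil, by simpa using h⟩

lemma comp_symm {S : Set V} {a b : V} (h : b ∈ comp G S a) : a ∈ comp G S b := by
  obtain ⟨w, hw⟩ := h
  exact ⟨w.reverse, by simpa using hw⟩

lemma comp_trans {S : Set V} {a b c : V} (h : b ∈ comp G S a) (h' : c ∈ comp G S b) :
    c ∈ comp G S a := by
  obtain ⟨w, hw⟩ := h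
  obtain ⟨w', hw'⟩ := h'
  refine ⟨w.append w', fun v hv => ?_⟩
  rw [SimpleGraph.Walk.mem_support_append_iff] at hv
  exact hv.elim (hw v) (hw' v)

lemma comp_eq {S : Set V} {a b : V} (h : b ∈ comp G S a) : comp G S b = comp G S a :=
  Set.Subset.antisymm (fun _ hc => comp_trans h hc) (fun _ hc => comp_trans (comp_symm h) hc)

lemma comp_adj {S : Set V} {a b c : V} (h : b ∈ comp G S a) (hbc : G.Adj b c) (hc : c ∈ S) :
    c ∈ comp G S a :=
  comp_trans h ⟨.cons hbc .nil, by simp [hc, comp_sub h]⟩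

lemma comp_conn {S : Set V} {a b c : V} (hb : b ∈ comp G S a) (hc : c ∈ comp G S a) :
    ∃ w : G.Walk b c, ∀ v ∈ w.support, v ∈ comp G S a := by
  obtain ⟨w, hw⟩ := comp_trans (comp_symm hb) hc
  refine ⟨w, fun v hv => comp_trans hb ⟨w.takeUntil v hv, fun x hx => ?_⟩⟩
  exact hw x (w.support_takeUntil_subset_support hv hx)

lemma happy_congr {π π' : V → Bool} {v : V} (h : Happy G π v) (hv : π' v = π v)
    (hn : ∀ y, G.Adj v y → π' y = π y) : Happy G π' v := by
  unfold Happy at *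
  have e1 : {y : V | G.Adj v y ∧ π' y = π' v} = {y : V | G.Adj v y ∧ π y = π v} := by
    ext y
    exact and_congr_right fun hy => by rw [hv, hn y hy]
  have e2 : {y : V | G.Adj v y ∧ π' y ≠ π' v} = {y : V | G.Adj v y ∧ π y ≠ π v} := by
    ext y
    exact and_congr_right fun hy => by rw [hv, hn y hy]
  rw [e1, e2]; exact h

lemma TS_comps {S : Set V} (h : ∀ a ∈ S, TS G (comp G S a)) : TS G S := by
  intro R hR c
  have hch : ∀ K : Set V, ∃ p : V → Bool, (∃ a ∈ S, K = comp G S a) →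
      (∀ v, v ∉ K ∩ R → p v = c v) ∧ Good G (K ∩ R) p := by
    intro K
    by_cases hK : ∃ a ∈ S, K = comp G S a
    · obtain ⟨a, ha, rfl⟩ := hK
      obtain ⟨p, hp⟩ := h a ha (comp G S a ∩ R) Set.inter_subset_left c
      exact ⟨p, fun _ => hp⟩
    · exact ⟨c, fun h => absurd h hK⟩
  choose p hp using hch
  let π : V → Bool := fun v => if v ∈ R then p (comp G S v) v else c v
  have hself : ∀ v ∈ R, π v = p (comp G S v) v := fun v hv => by simp [π, hv]
  have hnb : ∀ v ∈ R, ∀ y, G.Adj v y → π y = p (comp G S v) y := by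
    intro v hv y hy
    by_cases hyR : y ∈ R
    · have hyc : y ∈ comp G S v := comp_adj (comp_self (hR hv)) hy (hR hyR)
      simp [π, hyR, comp_eq hyc]
    · rw [((hp _ ⟨v, hR hv, rfl⟩).1 y fun h => hyR h.2)]
      simp [π, hyR]
  refine ⟨π, fun v hv => by simp [π, hv], fun v hv hvi => ?_, fun F hF => ?_⟩
  · exact happy_congr ((hp _ ⟨v, hR hv, rfl⟩).2.1 v ⟨comp_self (hR hv), hv⟩ hvi) (hself v hv)
      (hnb v hv)
  · refine gain_split (comp G S) π F (fun a ha => (hF a ha).2) ?_ ?_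
    · intro a ha b hb hab
      exact (comp_eq (comp_adj (comp_self (hR (hF a ha).1)) hab (hR (hF b hb).1))).symm
    · intro K F' hF'
      by_cases hK : ∃ a ∈ S, K = comp G S a
      · have hq := hp K hK
        have : gain G π F' =
            gain G (p K) F' := by
          refine gain_congr (fun a ha => (hF a ((hF' a).1 ha).1).2) ?_ ?_
          · intro a ha
            rw [hF'] at ha
            rw [hself a (hF a ha.1).1, ha.2]
          · intro a ha b hab
            rw [hF'] at ha
            rw [hnb a (hF a ha.1).1 b hab, ha.2]
        rw [this]
        refine hq.2.2 _ fun a ha => ?_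
        rw [hF'] at ha
        refine ⟨⟨?_, (hF a ha.1).1⟩, (hF a ha.1).2⟩
        rw [← ha.2]
        exact comp_self (hR (hF a ha.1).1)
      · have : F' = ∅ := by
          refine Finset.eq_empty_of_forall_notMem fun a ha => ?_
          rw [hF'] at ha
          exact hK ⟨a, hR (hF a ha.1).1, ha.2.symm⟩
        rw [this]
        simp [gain]

def Bad (G : SimpleGraph V) (C : Set V) : Prop :=
  ¬ TS G C ∧ ∀ a ∈ C, ∀ b ∈ C, ∃ w : G.Walk a b, ∀ v ∈ w.support, v ∈ C

lemma exists_bad {S : Set V} (hS : ¬ TS G S) (Y : Finset V) :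
    ∃ a ∈ S \ (Y : Set V), Bad G (comp G (S \ Y) a) := by
  by_contra hcon
  push Not at hcon
  apply hS
  apply TS_of_sdiff Y
  apply TS_comps
  intro a ha
  by_contra hb
  exact hcon a ha ⟨hb, fun _ h1 _ h2 => comp_conn h1 h2⟩

structure St (G : SimpleGraph V) where
  x : V
  q : V
  t : V
  C : Set V
  w : G.Walk x q
  p : G.Walk q t
  path : (w.append p).IsPath
  disj : ∀ v ∈ (w.append p).support, v ∉ C
  bad : Bad G C
  adj : ∃ y ∈ C, G.Adj q y
  tooth : t ∈ Vinf G

def St.Z (s : St G) : Set V := {v | v ∈ (s.w.append s.p).support} ∪ s.C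

lemma new_state {C : Set V} (hC : Bad G C) {x : V} (hx : x ∈ C) :
    ∃ s : St G, s.x = x ∧ s.Z ⊆ C := by
  have ht : ∃ t ∈ C, t ∈ Vinf G := by
    by_contra h
    push Not at h
    exact hC.1 fun S' hS' => base fun v hv => h v (hS' hv)
  obtain ⟨t, htC, ht⟩ := ht
  obtain ⟨w0, hw0⟩ := hC.2 x hx t htC
  have hPC : ∀ v ∈ w0.bypass.support, v ∈ C := fun v hv => hw0 v (w0.support_bypass_subset_support hv)
  have hP : w0.bypass.IsPath := w0.bypass_isPath
  generalize w0.bypass = P at hPC hP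
  obtain ⟨a, ha, hbad⟩ := exists_bad hC.1 P.support.toFinset
  set C' := comp G (C \ (P.support.toFinset : Set V)) a with hC'
  have hC'C : C' ⊆ C := fun v hv => (comp_sub hv).1
  have hC'P : ∀ v ∈ C', v ∉ P.support := by
    intro v hv h
    exact (comp_sub hv).2 (by simpa using h)
  have hxC' : x ∉ C' := fun h => hC'P x h P.start_mem_support
  obtain ⟨w1, hw1⟩ := hC.2 a ha.1 x hx
  obtain ⟨d, hd, hd1, hd2⟩ := w1.exists_boundary_dart C' (comp_self ha) hxC'
  have hq : d.snd ∈ P.support := by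
    by_contra hcon
    refine hd2 (comp_adj hd1 d.adj ⟨hw1 _ (w1.dart_snd_mem_support_of_mem_darts hd), ?_⟩)
    simpa using hcon
  refine ⟨⟨x, d.snd, t, C', P.takeUntil _ hq, P.dropUntil _ hq, ?_, ?_, hbad,
    ⟨d.fst, hd1, d.adj.symm⟩, ht⟩, rfl, ?_⟩
  · rw [P.take_spec]; exact hP
  · rw [P.take_spec]; exact fun v hv hv' => hC'P v hv' hv
  · unfold St.Z
    simp only [P.take_spec]
    rintro v (hv | hv)
    · exact hPC v hv
    · exact hC'C hv

lemma step (s : St G) : ∃ s' : St G, G.Adj s.x s'.x ∧ s'.Z ⊆ s.Z \ {s.x} ∧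
    (s.w.length = 0 → s'.Z ⊆ s.C) ∧ (s.w.length ≠ 0 → s'.w.length < s.w.length) := by
  obtain ⟨x, q, t, C, w, p, path, disj, bad, ⟨y, hy, hqy⟩, tooth⟩ := s
  cases w with
  | nil =>
    obtain ⟨s', h1, h2⟩ := new_state bad hy
    refine ⟨s', by rw [h1]; exact hqy, fun v hv => ⟨Or.inr (h2 hv), ?_⟩, fun _ => h2, by simp⟩
    rintro rfl
    exact disj _ (by simp) (h2 hv)
  | @cons _ x' _ h w' =>
    rw [SimpleGraph.Walk.cons_append, SimpleGraph.Walk.cons_isPath_iff] at path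
    have disj' : ∀ v ∈ (w'.append p).support, v ∉ C := by
      intro v hv
      apply disj
      rw [SimpleGraph.Walk.cons_append, SimpleGraph.Walk.support_cons]
      exact List.mem_cons_of_mem _ hv
    refine ⟨⟨x', q, t, C, w', p, path.1, disj', bad, ⟨y, hy, hqy⟩, tooth⟩, h, ?_, by simp, by simp⟩
    rintro v (hv | hv)
    · refine ⟨Or.inl ?_, ?_⟩
      · show v ∈ ((SimpleGraph.Walk.cons h w').append p).support
        rw [SimpleGraph.Walk.cons_append, SimpleGraph.Walk.support_cons]
        exact List.mem_cons_of_mem _ hv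
      · rintro rfl
        exact path.2 hv
    · refine ⟨Or.inr hv, ?_⟩
      rintro rfl
      exact disj _ (by simp) hv

lemma St.x_mem (s : St G) : s.x ∈ s.Z := Or.inl (by simp)

lemma main (h : ¬ TS G Set.univ) : HasCombWithTeethIn G (Vinf G) := by
  obtain ⟨a, ha, hbad⟩ := exists_bad h ∅
  obtain ⟨s0, -, -⟩ := new_state hbad (comp_self ha)
  choose nx hadj hZ hnil hlen using step (G := G)
  let s : ℕ → St G := fun n => nx^[n] s0
  have hs : ∀ n, s (n + 1) = nx (s n) := fun n => Function.iterate_succ_apply' nx n s0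
  have hmono : ∀ m n, m ≤ n → (s n).Z ⊆ (s m).Z := by
    intro m n hmn
    induction n, hmn using Nat.le_induction with
    | base => exact le_rfl
    | succ n _ ih => rw [hs]; exact fun v hv => ih (hZ _ hv).1
  have hnot : ∀ m n, m < n → (s m).x ∉ (s n).Z := by
    intro m n hmn hin
    have := hmono (m + 1) n hmn hin
    rw [hs] at this
    exact (hZ _ this).2 rfl
  have hC : ∀ m n, m < n → (s m).w.length = 0 → (s n).Z ⊆ (s m).C := by
    intro m n hmn h0 v hv
    have := hmono (m + 1) n hmn hv
    rw [hs] at this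
    exact hnil _ h0 this
  have hfreq : ∀ N, ∃ n ≥ N, (s n).w.length = 0 := by
    have : ∀ k N, (s N).w.length ≤ k → ∃ n ≥ N, (s n).w.length = 0 := by
      intro k
      induction k with
      | zero => intro N hN; exact ⟨N, le_rfl, by omega⟩
      | succ k ih =>
        intro N hN
        by_cases h0 : (s N).w.length = 0
        · exact ⟨N, le_rfl, h0⟩
        · have := hlen _ h0
          rw [← hs] at this
          obtain ⟨n, hn, hn'⟩ := ih (N + 1) (by omega)
          exact ⟨n, by omega, hn'⟩
    exact fun N => this _ N le_rfl
  obtain ⟨k, hk, hk0⟩ := Filter.extraction_of_frequently_atTop (Filter.frequently_atTop.2 hfreq)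
  have hinj : Function.Injective fun n => (s n).x := by
    intro m n hmn
    by_contra hne
    rcases lt_or_gt_of_ne hne with h | h
    · refine hnot m n h ?_
      have : (s m).x = (s n).x := hmn
      rw [this]; exact (s n).x_mem
    · refine hnot n m h ?_
      have : (s m).x = (s n).x := hmn
      rw [← this]; exact (s m).x_mem
  have hpsub : ∀ n, ∀ v ∈ ((s n).w.append (s n).p).support, v ∈ (s n).Z := fun n v hv => Or.inl hv
  have hdis : ∀ m n, m < n → ∀ v, v ∈ ((s (k m)).w.append (s (k m)).p).support →
      v ∉ ((s (k n)).w.append (s (k n)).p).support := by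
    intro m n hmn v hv hv'
    exact (s (k m)).disj v hv (hC _ _ (hk hmn) (hk0 m) (hpsub _ v hv'))
  refine ⟨fun n => (s n).x, k, fun n => (s (k n)).t, fun n => (s (k n)).w.append (s (k n)).p,
    hinj, fun n => ?_, hk, fun n => (s (k n)).tooth, fun n => (s (k n)).path, ?_, ?_⟩
  · show G.Adj (s n).x (s (n + 1)).x
    rw [hs]; exact hadj _
  · intro m n hmn v hv hv'
    rcases lt_or_gt_of_ne hmn with h | h
    · exact hdis m n h v hv hv'
    · exact hdis n m h v hv' hv
  · rintro n v hv ⟨i, rfl⟩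
    rcases lt_trichotomy i (k n) with h | h | h
    · exact absurd (hpsub _ _ hv) (hnot i (k n) h)
    · rw [h]
    · exact absurd (hC _ _ h (hk0 n) (s i).x_mem) ((s (k n)).disj _ hv)

end

end NB

/-- Every graph containing no brush (a comb all of whose teeth have infinite degree) admits an
unfriendly partition. -/
theorem no_brush_unfriendly {V : Type*} (G : SimpleGraph V)
    (hbrush : ¬ HasCombWithTeethIn G (Vinf G)) :
    ∃ π : V → Bool, Unfriendly G π := by
  have h : NB.TS G Set.univ := by
    by_contra h
    exact hbrush (NB.main h)
  obtain ⟨π, -, hπ⟩ := h Set.univ le_rfl (fun _ => false)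
  refine ⟨π, fun x => ?_⟩
  by_cases hx : x ∈ Vinf G
  · exact hπ.1 x trivial hx
  · exact NB.opt_happy hπ.2 trivial hx
end
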